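/- arXiv:2310.09227 — 2 statements merged into one kernel-verified Lean document; each statement's English description precedes it below -/
import Mathlib

section
/- Let n ≥ 5 be an integer and let L be the Laplacian matrix of the Kneser graph K(n,2): the square integer matrix indexed by the 2-element subsets of {1,…,n} with L(A,A) = C(n−2,2), L(A,B) = −1 when A ∩ B = ∅, and L(A,B) = 0 when |A ∩ B| = 1. Let a, b, c be the natural numbers determined by 2a = (n−1)(n−4), 4b = (n−1)(n−3)(n−4)n, and 2c = (n−3)(n−4). Then there is an isomorphism of abelian groups S(L) ≅ ℤ ⊕ (ℤ/aℤ)^{C(n,2)−2n+1} ⊕ (ℤ/bℤ)^{n−2} ⊕ ℤ/cℤ. -/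
open scoped Classical

/-- The `k`-element subsets of `{1,…,n}`. -/
def ksubsets (n k : ℕ) : Finset (Finset ℕ) :=
  (Finset.Icc 1 n).powerset.filter fun A => A.card = k

/-- The Smith group of an integer matrix. -/
abbrev SmithGroup {ρ γ : Type*} (M : Matrix ρ γ ℤ) : Type _ :=
  (γ → ℤ) ⧸ Submodule.span ℤ (Set.range fun r : ρ => M r)

/-- The Laplacian of the Kneser graph `K(n,2)`: diagonal entry `C(n−2,2)`, entry `−1`
between disjoint 2-subsets, `0` between distinct 2-subsets meeting in one point. -/
noncomputable def kneserLap (n : ℕ) : Matrix ↥(ksubsets n 2) ↥(ksubsets n 2) ℤ :=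
  Matrix.of fun A B =>
    if A = B then ((n - 2).choose 2 : ℤ)
    else if (A : Finset ℕ) ∩ (B : Finset ℕ) = ∅ then -1
    else 0

/-- sum over the pairs containing `i` -/
def incSum {A : Type*} [AddCommGroup A] (V : Finset ℕ) (f : Finset ℕ → A) (i : ℕ) : A :=
  ∑ p ∈ (V.powersetCard 2).filter (fun p => i ∈ p), f p

lemma incSum_eq {A : Type*} [AddCommGroup A] (V : Finset ℕ) (f : Finset ℕ → A) (i : ℕ)
    (hi : i ∈ V) : incSum V f i = ∑ j ∈ V.erase i, f {i, j} := by
  unfold incSum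
  symm
  refine Finset.sum_bij (fun j _ => ({i, j} : Finset ℕ)) ?_ ?_ ?_ ?_
  · intro j hj
    rw [Finset.mem_erase] at hj
    simp only [Finset.mem_filter, Finset.mem_powersetCard]
    refine ⟨⟨?_, Finset.card_pair (Ne.symm hj.1)⟩, by simp⟩
    intro x hx
    simp only [Finset.mem_insert, Finset.mem_singleton] at hx
    rcases hx with rfl | rfl
    · exact hi
    · exact hj.2
  · intro j hj l hl h
    rw [Finset.mem_erase] at hj hl
    have : j ∈ ({i, l} : Finset ℕ) := by
      rw [← h]; simp
    simp only [Finset.mem_insert, Finset.mem_singleton] at this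
    tauto
  · intro p hp
    simp only [Finset.mem_filter, Finset.mem_powersetCard] at hp
    obtain ⟨⟨hpV, hc⟩, hip⟩ := hp
    obtain ⟨x, y, hxy, rfl⟩ := Finset.card_eq_two.mp hc
    simp only [Finset.mem_insert, Finset.mem_singleton] at hip
    have hx : x ∈ V := hpV (by simp)
    have hy : y ∈ V := hpV (by simp)
    rcases hip with rfl | rfl
    · exact ⟨y, Finset.mem_erase.2 ⟨hxy.symm, hy⟩, rfl⟩
    · exact ⟨x, Finset.mem_erase.2 ⟨hxy, hx⟩, Finset.pair_comm _ _⟩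
  · intros; rfl

lemma sum_incSum {A : Type*} [AddCommGroup A] (V : Finset ℕ) (f : Finset ℕ → A) :
    ∑ i ∈ V, incSum V f i = (2 : ℤ) • ∑ p ∈ V.powersetCard 2, f p := by
  unfold incSum
  simp_rw [Finset.sum_filter]
  rw [Finset.sum_comm, Finset.smul_sum]
  refine Finset.sum_congr rfl fun p hp => ?_
  rw [Finset.mem_powersetCard] at hp
  rw [← Finset.sum_filter, Finset.filter_mem_eq_inter, Finset.inter_eq_right.2 hp.1,
    Finset.sum_const, hp.2]
  rw [two_smul, two_smul]

lemma incSum_pair {A : Type*} [AddCommGroup A] (V : Finset ℕ) (k : ℤ) (hk : (V.card : ℤ) = k)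
    (x : ℕ → A) (i : ℕ) (hi : i ∈ V) :
    incSum V (fun p => ∑ j ∈ p, x j) i = (k - 2) • x i + ∑ j ∈ V, x j := by
  rw [incSum_eq V _ i hi]
  have h1 : ∀ j ∈ V.erase i, ∑ l ∈ ({i, j} : Finset ℕ), x l = x i + x j := by
    intro j hj
    exact Finset.sum_pair (Ne.symm (Finset.mem_erase.1 hj).1)
  rw [Finset.sum_congr rfl h1, Finset.sum_add_distrib, Finset.sum_const,
    Finset.card_erase_of_mem hi, ← Finset.add_sum_erase V x hi]
  have : 1 ≤ V.card := Finset.card_pos.2 ⟨i, hi⟩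
  rw [← natCast_zsmul, Nat.cast_sub this, hk]
  push_cast
  module

lemma incSum_const {A : Type*} [AddCommGroup A] (V : Finset ℕ) (k : ℤ) (hk : (V.card : ℤ) = k)
    (y : A) (i : ℕ) (hi : i ∈ V) :
    incSum V (fun _ => y) i = (k - 1) • y := by
  rw [incSum_eq V _ i hi, Finset.sum_const, Finset.card_erase_of_mem hi]
  have : 1 ≤ V.card := Finset.card_pos.2 ⟨i, hi⟩
  rw [← natCast_zsmul, Nat.cast_sub this, hk]
  push_cast
  module

lemma sum_pair_pair {A : Type*} [AddCommGroup A] (V : Finset ℕ) (k : ℤ) (hk : (V.card : ℤ) = k)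
    (x : ℕ → A) :
    ∑ p ∈ V.powersetCard 2, ∑ j ∈ p, x j = (k - 1) • ∑ j ∈ V, x j := by
  have h : ∀ p ∈ V.powersetCard 2, ∑ j ∈ p, x j = ∑ j ∈ V, if j ∈ p then x j else 0 := by
    intro p hp
    rw [Finset.mem_powersetCard] at hp
    rw [← Finset.sum_filter, Finset.filter_mem_eq_inter, Finset.inter_eq_right.2 hp.1]
  rw [Finset.sum_congr rfl h, Finset.sum_comm, Finset.smul_sum]
  refine Finset.sum_congr rfl fun i hi => ?_
  rw [← Finset.sum_filter]
  exact incSum_const V k hk (x i) i hi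

lemma sum_pair_const {A : Type*} [AddCommGroup A] (V : Finset ℕ) (k C : ℤ)
    (hk : (V.card : ℤ) = k) (hC : 2 * C = k * (k - 1)) (y : A) :
    ∑ _p ∈ V.powersetCard 2, y = C • y := by
  rw [Finset.sum_const, Finset.card_powersetCard, ← natCast_zsmul]
  congr 1
  have h := Nat.choose_two_right V.card
  have h2 : 2 * V.card.choose 2 = V.card * (V.card - 1) := by
    rw [h]
    exact Nat.mul_div_cancel' (Nat.even_mul_pred_self _).two_dvd
  have h3 : 2 * ((V.card.choose 2 : ℕ) : ℤ) = V.card * (V.card - 1) := by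
    rcases Nat.eq_zero_or_pos V.card with h0 | h0
    · simp [h0]
    · have := congrArg (Nat.cast : ℕ → ℤ) h2
      push_cast [Nat.cast_sub h0] at this
      exact this
  rw [hk] at h3
  linarith

/-- Sum formulas after the change of variables. -/
lemma f_sums {A : Type*} [AddCommGroup A] (V : Finset ℕ) (k C : ℤ)
    (hk : (V.card : ℤ) = k) (hC : 2 * C = k * (k - 1)) (y : A) (x : ℕ → A) (z f : Finset ℕ → A)
    (hf : ∀ p ∈ V.powersetCard 2, f p = z p + ∑ i ∈ p, x i - y) :
    (∑ p ∈ V.powersetCard 2, f p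
      = ∑ p ∈ V.powersetCard 2, z p + (k - 1) • ∑ i ∈ V, x i - C • y) ∧
    (∀ i ∈ V, incSum V f i = incSum V z i + (k - 2) • x i + ∑ j ∈ V, x j - (k - 1) • y) := by
  constructor
  · rw [Finset.sum_congr rfl hf, Finset.sum_sub_distrib, Finset.sum_add_distrib,
      sum_pair_pair V k hk, sum_pair_const V k C hk hC]
  · intro i hi
    have h1 := incSum_pair V k hk x i hi
    have h2 := incSum_const V k hk y i hi
    have : incSum V f i = incSum V z i + incSum V (fun p => ∑ j ∈ p, x j) i
        - incSum V (fun _ => y) i := by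
      unfold incSum
      rw [← Finset.sum_add_distrib, ← Finset.sum_sub_distrib]
      refine Finset.sum_congr rfl fun p hp => hf p (Finset.mem_filter.1 hp).1
    rw [this, h1, h2]
    abel

/-- The presentation in split coordinates. -/
structure PresOne {A : Type*} [AddCommGroup A] (V : Finset ℕ) (a : ℤ)
    (w : A) (p q : ℕ → A) (f : Finset ℕ → A) : Prop where
  r0 : a • w = ∑ P ∈ V.powersetCard 2, f P - w
  r1 : ∀ i ∈ V, a • p i = ∑ j ∈ V, q j + ∑ P ∈ V.powersetCard 2, f P
    - (p i + q i + incSum V f i)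
  r2 : ∀ i ∈ V, a • q i = ∑ j ∈ V, p j + ∑ P ∈ V.powersetCard 2, f P
    - (p i + q i + incSum V f i)
  r3 : ∀ P ∈ V.powersetCard 2, a • f P = w + ∑ j ∈ V, p j + ∑ j ∈ V, q j
    + ∑ P ∈ V.powersetCard 2, f P - ∑ i ∈ P, (p i + q i + incSum V f i)

structure PresTwo {A : Type*} [AddCommGroup A] (V : Finset ℕ) (k a r c : ℤ)
    (x : ℕ → A) (σ : A) (z : Finset ℕ → A) : Prop where
  hz : ∀ P ∈ V.powersetCard 2, a • z P = 0
  hx : ∀ i ∈ V, (a * r) • x i = 0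
  hs : c • σ = 0
  hS : ∑ P ∈ V.powersetCard 2, z P = -(r • ∑ i ∈ V, x i) + (k - 1) • σ

lemma pres_forward {A : Type*} [AddCommGroup A] (V : Finset ℕ) (k a r c : ℤ)
    (hk : (V.card : ℤ) = k) (hc : 2 * c = (k - 1) * (k - 2)) (ha : a = c + k - 2)
    (hr : r = a + k) (y σ w : A) (x p q : ℕ → A) (z f : Finset ℕ → A)
    (h : PresTwo V k a r c x σ z)
    (hw : w = σ - ∑ i ∈ V, x i - y)
    (hp : ∀ i ∈ V, p i = x i - y)
    (hq : ∀ i ∈ V, q i = -(r • x i) - incSum V z i + x i + σ - ∑ i ∈ V, x i - y)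
    (hf : ∀ P ∈ V.powersetCard 2, f P = z P + ∑ i ∈ P, x i - y) :
    PresOne V a w p q f := by
  obtain ⟨hz, hx, hs, hS⟩ := h
  obtain ⟨hF, hFi⟩ := f_sums V k (c + k - 1) hk (by linarith) y x z f hf
  have hP : ∑ j ∈ V, p j = ∑ i ∈ V, x i - k • y := by
    rw [Finset.sum_congr rfl hp, Finset.sum_sub_distrib, Finset.sum_const, ← natCast_zsmul, hk]
  have hQ : ∑ j ∈ V, q j = -(r • ∑ i ∈ V, x i) - (2 : ℤ) • ∑ P ∈ V.powersetCard 2, z P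
      + ∑ i ∈ V, x i + k • σ - k • ∑ i ∈ V, x i - k • y := by
    rw [Finset.sum_congr rfl hq, Finset.sum_sub_distrib, Finset.sum_sub_distrib,
      Finset.sum_add_distrib, Finset.sum_add_distrib, Finset.sum_sub_distrib,
      Finset.sum_const, Finset.sum_const, Finset.sum_const, Finset.sum_neg_distrib,
      ← Finset.smul_sum, sum_incSum]
    simp only [← natCast_zsmul, hk]
  have hzi : ∀ i, a • incSum V z i = 0 := by
    intro i
    unfold incSum
    rw [Finset.smul_sum]
    exact Finset.sum_eq_zero fun P hP => hz P (Finset.mem_filter.1 hP).1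
  have hsi : ∀ i ∈ V, p i + q i + incSum V f i = (k - r) • x i + σ - (k + 1) • y := by
    intro i hi
    rw [hp i hi, hq i hi, hFi i hi]
    module
  rw [hS] at hF hQ
  subst hr ha
  refine ⟨?_, ?_, ?_, ?_⟩
  · rw [hF, hw]
    linear_combination (norm := module) hs
  · intro i hi
    rw [hsi i hi, hQ, hF, hp i hi]
    module
  · intro i hi
    rw [hsi i hi, hP, hF, hq i hi]
    linear_combination (norm := module) -hx i hi - hzi i + hs
  · intro P hPm
    have h1 : ∑ i ∈ P, (p i + q i + incSum V f i)
        = (k - (c + k - 2 + k)) • ∑ i ∈ P, x i + (2 : ℤ) • σ - (2 * (k + 1)) • y := by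
      rw [Finset.mem_powersetCard] at hPm
      rw [Finset.sum_congr rfl fun i hi => hsi i (hPm.1 hi), Finset.sum_sub_distrib,
        Finset.sum_add_distrib, ← Finset.smul_sum, Finset.sum_const, Finset.sum_const, hPm.2]
      module
    rw [h1, hP, hQ, hF, hf P hPm, hw]
    linear_combination (norm := module) hz P hPm

lemma pres_backward {A : Type*} [AddCommGroup A] (V : Finset ℕ) (k a r c : ℤ)
    (hk : (V.card : ℤ) = k) (hc : 2 * c = (k - 1) * (k - 2)) (ha : a = c + k - 2)
    (hr : r = a + k) (y σ w : A) (x p q : ℕ → A) (z f : Finset ℕ → A)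
    (h : PresOne V a w p q f) (g : Finset ℕ) (hg : g ∈ V.powersetCard 2)
    (hy : y = f g - ∑ i ∈ g, p i)
    (hx : ∀ i ∈ V, x i = p i + y)
    (hs : σ = w + y + ∑ i ∈ V, x i)
    (hz : ∀ P ∈ V.powersetCard 2, z P = f P - ∑ i ∈ P, x i + y) :
    PresTwo V k a r c x σ z ∧
    ∀ i ∈ V, q i = -(r • x i) - incSum V z i + x i + σ - ∑ i ∈ V, x i - y := by
  obtain ⟨r0, r1, r2, r3⟩ := h
  have hf : ∀ P ∈ V.powersetCard 2, f P = z P + ∑ i ∈ P, x i - y := by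
    intro P hP
    rw [hz P hP]; abel
  have hp : ∀ i ∈ V, p i = x i - y := by
    intro i hi
    rw [hx i hi]; abel
  have hw : w = σ - ∑ i ∈ V, x i - y := by rw [hs]; abel
  obtain ⟨hF, hFi⟩ := f_sums V k (c + k - 1) hk (by linarith) y x z f hf
  have hPs : ∑ j ∈ V, p j = ∑ i ∈ V, x i - k • y := by
    rw [Finset.sum_congr rfl hp, Finset.sum_sub_distrib, Finset.sum_const, ← natCast_zsmul, hk]
  have hkey : ∀ P ∈ V.powersetCard 2, a • (f P - ∑ i ∈ P, p i) =
      w + ∑ j ∈ V, p j - ∑ j ∈ V, q j - ∑ P ∈ V.powersetCard 2, f P := by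
    intro P hP
    have hPm := Finset.mem_powersetCard.1 hP
    rw [smul_sub, r3 P hP, Finset.smul_sum,
      Finset.sum_congr rfl fun i hi => r1 i (hPm.1 hi), Finset.sum_sub_distrib, Finset.sum_const,
      hPm.2]
    module
  have hay : a • y = w + ∑ j ∈ V, p j - ∑ j ∈ V, q j - ∑ P ∈ V.powersetCard 2, f P := by
    rw [hy]; exact hkey g hg
  have hzz : ∀ P ∈ V.powersetCard 2, a • z P = 0 := by
    intro P hP
    have hPm := Finset.mem_powersetCard.1 hP
    have h1 : ∑ i ∈ P, x i = ∑ i ∈ P, p i + (2 : ℤ) • y := by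
      rw [Finset.sum_congr rfl fun i hi => hx i (hPm.1 hi), Finset.sum_add_distrib,
        Finset.sum_const, hPm.2]
      module
    have h2 := hkey P hP
    rw [← hay] at h2
    rw [hz P hP, h1]
    linear_combination (norm := module) h2
  have hzi : ∀ i, a • incSum V z i = 0 := by
    intro i
    unfold incSum
    rw [Finset.smul_sum]
    exact Finset.sum_eq_zero fun P hP => hzz P (Finset.mem_filter.1 hP).1
  have hq : ∀ i ∈ V, q i = -(r • x i) - incSum V z i + x i + σ - ∑ i ∈ V, x i - y := by
    intro i hi
    have h1 := r1 i hi
    rw [hFi i hi, hp i hi] at h1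
    rw [hPs, hw] at hay
    subst hr ha
    linear_combination (norm := module) h1 + hay
  have hQ : ∑ j ∈ V, q j = -(r • ∑ i ∈ V, x i) - (2 : ℤ) • ∑ P ∈ V.powersetCard 2, z P
      + ∑ i ∈ V, x i + k • σ - k • ∑ i ∈ V, x i - k • y := by
    rw [Finset.sum_congr rfl hq, Finset.sum_sub_distrib, Finset.sum_sub_distrib,
      Finset.sum_add_distrib, Finset.sum_add_distrib, Finset.sum_sub_distrib,
      Finset.sum_const, Finset.sum_const, Finset.sum_const, Finset.sum_neg_distrib,
      ← Finset.smul_sum, sum_incSum]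
    simp only [← natCast_zsmul, hk]
  have hS : ∑ P ∈ V.powersetCard 2, z P = -(r • ∑ i ∈ V, x i) + (k - 1) • σ := by
    rw [hPs, hw, hQ, hF] at hay
    subst hr ha
    linear_combination (norm := module) -hay
  have hcs : c • σ = 0 := by
    rw [hF, hw, hS] at r0
    subst hr ha
    linear_combination (norm := module) r0
  refine ⟨⟨hzz, ?_, hcs, hS⟩, hq⟩
  intro i hi
  have h2 := r2 i hi
  rw [hFi i hi, hPs, hF, hS, hp i hi, hq i hi] at h2
  have h3 := hzi i
  subst hr ha
  linear_combination (norm := module) -h2 - h3 + hcs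

lemma powersetCard_two_insert_sum {A : Type*} [AddCommGroup A] (V : Finset ℕ) (v : ℕ)
    (hv : v ∉ V) (e : Finset ℕ → A) :
    ∑ B ∈ (insert v V).powersetCard 2, e B
      = ∑ B ∈ V.powersetCard 2, e B + ∑ i ∈ V, e {v, i} := by
  have h := incSum_eq (insert v V) e v (by simp)
  rw [Finset.erase_insert hv] at h
  rw [← h, ← Finset.sum_filter_not_add_sum_filter _ (fun p => v ∈ p)]
  unfold incSum
  congr 1
  refine Finset.sum_congr ?_ fun _ _ => rfl
  ext B
  simp only [Finset.mem_filter, Finset.mem_powersetCard]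
  constructor
  · rintro ⟨⟨h1, h2⟩, h3⟩
    exact ⟨(Finset.subset_insert_iff_of_notMem h3).1 h1, h2⟩
  · rintro ⟨h1, h2⟩
    exact ⟨⟨h1.trans (Finset.subset_insert _ _), h2⟩, fun h => hv (h1 h)⟩

def KRel {A : Type*} [AddCommGroup A] (V : Finset ℕ) (a : ℤ) (e : Finset ℕ → A) : Prop :=
  ∀ B ∈ V.powersetCard 2, a • e B = ∑ P ∈ V.powersetCard 2, e P - ∑ i ∈ B, incSum V e i

lemma pairs_cases (V : Finset ℕ) (α β : ℕ) (hαβ : α ≠ β)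
    (B : Finset ℕ) (hB : B ∈ (insert α (insert β V)).powersetCard 2) :
    B = {α, β} ∨ (∃ i ∈ V, B = {α, i}) ∨ (∃ i ∈ V, B = {β, i}) ∨ B ∈ V.powersetCard 2 := by
  rw [Finset.mem_powersetCard] at hB
  obtain ⟨h1, h2⟩ := hB
  obtain ⟨x, y, hxy, rfl⟩ := Finset.card_eq_two.mp h2
  have hx := h1 (show x ∈ ({x, y} : Finset ℕ) by simp)
  have hy := h1 (show y ∈ ({x, y} : Finset ℕ) by simp)
  simp only [Finset.mem_insert] at hx hy
  rcases hx with rfl | rfl | hx <;> rcases hy with rfl | rfl | hy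
  · exact absurd rfl hxy
  · exact Or.inl rfl
  · exact Or.inr (Or.inl ⟨_, hy, rfl⟩)
  · exact Or.inl (Finset.pair_comm _ _)
  · exact absurd rfl hxy
  · exact Or.inr (Or.inr (Or.inl ⟨_, hy, rfl⟩))
  · exact Or.inr (Or.inl ⟨_, hx, Finset.pair_comm _ _⟩)
  · exact Or.inr (Or.inr (Or.inl ⟨_, hx, Finset.pair_comm _ _⟩))
  · refine Or.inr (Or.inr (Or.inr ?_))
    rw [Finset.mem_powersetCard]
    refine ⟨?_, h2⟩
    intro t ht
    simp only [Finset.mem_insert, Finset.mem_singleton] at ht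
    rcases ht with rfl | rfl <;> assumption

lemma rel_iff {A : Type*} [AddCommGroup A] (V : Finset ℕ) (α β : ℕ) (hαβ : α ≠ β)
    (hα : α ∉ V) (hβ : β ∉ V) (a : ℤ) (e : Finset ℕ → A) :
    KRel (insert α (insert β V)) a e ↔
      PresOne V a (e {α, β}) (fun i => e {α, i}) (fun i => e {β, i}) e := by
  have hα' : α ∉ insert β V := by simp [hαβ, hα]
  have hu : ∑ P ∈ (insert α (insert β V)).powersetCard 2, e P
      = e {α, β} + ∑ i ∈ V, e {α, i} + ∑ i ∈ V, e {β, i} + ∑ P ∈ V.powersetCard 2, e P := by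
    rw [powersetCard_two_insert_sum _ _ hα', powersetCard_two_insert_sum _ _ hβ,
      Finset.sum_insert hβ]
    abel
  have hsα : incSum (insert α (insert β V)) e α = e {α, β} + ∑ i ∈ V, e {α, i} := by
    rw [incSum_eq _ _ _ (by simp), Finset.erase_insert hα', Finset.sum_insert hβ]
  have hsβ : incSum (insert α (insert β V)) e β = e {α, β} + ∑ i ∈ V, e {β, i} := by
    rw [incSum_eq _ _ _ (by simp), Finset.insert_comm, Finset.erase_insert (by simp [hαβ.symm, hβ]),
      Finset.sum_insert hα, Finset.pair_comm]
  have hsi : ∀ i ∈ V, incSum (insert α (insert β V)) e i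
      = e {α, i} + e {β, i} + incSum V e i := by
    intro i hi
    have h1 : α ≠ i := fun h => hα (h ▸ hi)
    have h2 : β ≠ i := fun h => hβ (h ▸ hi)
    rw [incSum_eq _ _ _ (by simp [hi]), incSum_eq V _ _ hi, Finset.erase_insert_of_ne h1,
      Finset.erase_insert_of_ne h2, Finset.sum_insert, Finset.sum_insert,
      Finset.pair_comm, Finset.pair_comm i β]
    · abel
    · simp [hβ]
    · simp [hα, hαβ]
  have hsub : V ⊆ insert α (insert β V) :=
    (Finset.subset_insert _ _).trans (Finset.subset_insert _ _)
  unfold KRel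
  rw [hu]
  constructor
  · intro h
    refine ⟨?_, ?_, ?_, ?_⟩
    · rw [h {α, β} (by
        rw [Finset.mem_powersetCard]
        exact ⟨by intro t; simp; tauto, Finset.card_pair hαβ⟩), Finset.sum_pair hαβ, hsα, hsβ]
      abel
    · intro i hi
      have h1 : α ≠ i := fun h => hα (h ▸ hi)
      rw [h {α, i} (by
        rw [Finset.mem_powersetCard]
        refine ⟨?_, Finset.card_pair h1⟩
        intro t ht
        simp only [Finset.mem_insert, Finset.mem_singleton] at ht ⊢
        rcases ht with rfl | rfl <;> tauto), Finset.sum_pair h1, hsα, hsi i hi]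
      abel
    · intro i hi
      have h1 : β ≠ i := fun h => hβ (h ▸ hi)
      rw [h {β, i} (by
        rw [Finset.mem_powersetCard]
        refine ⟨?_, Finset.card_pair h1⟩
        intro t ht
        simp only [Finset.mem_insert, Finset.mem_singleton] at ht ⊢
        rcases ht with rfl | rfl <;> tauto), Finset.sum_pair h1, hsβ, hsi i hi]
      abel
    · intro P hP
      have hPm := Finset.mem_powersetCard.1 hP
      rw [h P (Finset.powersetCard_mono hsub hP),
        Finset.sum_congr rfl fun i hi => hsi i (hPm.1 hi)]
  · rintro ⟨r0, r1, r2, r3⟩ B hB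
    rcases pairs_cases V α β hαβ B hB with rfl | ⟨i, hi, rfl⟩ | ⟨i, hi, rfl⟩ | hP
    · rw [r0, Finset.sum_pair hαβ, hsα, hsβ]
      abel
    · have h1 : α ≠ i := fun h => hα (h ▸ hi)
      have := r1 i hi
      rw [this, Finset.sum_pair h1, hsα, hsi i hi]
      abel
    · have h1 : β ≠ i := fun h => hβ (h ▸ hi)
      have := r2 i hi
      rw [this, Finset.sum_pair h1, hsβ, hsi i hi]
      abel
    · have hPm := Finset.mem_powersetCard.1 hP
      rw [r3 B hP, Finset.sum_congr rfl fun i hi => hsi i (hPm.1 hi)]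

lemma z_extend {A : Type*} [AddCommGroup A] (V : Finset ℕ) (k a r c : ℤ)
    (hc : 2 * c = (k - 1) * (k - 2)) (ha : a = c + k - 2)
    (σ : A) (x : ℕ → A) (z z0 : Finset ℕ → A) (g f : Finset ℕ)
    (hg : g ∈ V.powersetCard 2) (hf : f ∈ V.powersetCard 2) (hgf : f ≠ g)
    (hx : ∀ i ∈ V, (a * r) • x i = 0) (hs : c • σ = 0)
    (hz0 : ∀ P ∈ ((V.powersetCard 2).erase g).erase f, a • z0 P = 0)
    (hzg : z g = 0)
    (hzf : z f = -(r • ∑ i ∈ V, x i) + (k - 1) • σ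
      - ∑ P ∈ ((V.powersetCard 2).erase g).erase f, z0 P)
    (hz : ∀ P ∈ ((V.powersetCard 2).erase g).erase f, z P = z0 P) :
    PresTwo V k a r c x σ z := by
  have hf' : f ∈ (V.powersetCard 2).erase g := Finset.mem_erase.2 ⟨hgf, hf⟩
  refine ⟨?_, hx, hs, ?_⟩
  · intro P hP
    by_cases h1 : P = g
    · rw [h1, hzg, smul_zero]
    by_cases h2 : P = f
    · have hX : (a * r) • ∑ i ∈ V, x i = 0 := by
        rw [Finset.smul_sum]; exact Finset.sum_eq_zero hx
      have hZ : a • ∑ P ∈ ((V.powersetCard 2).erase g).erase f, z0 P = 0 := by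
        rw [Finset.smul_sum]; exact Finset.sum_eq_zero hz0
      have h3 : (a * (k - 1)) • σ = 0 := by
        have : a * (k - 1) = (k + 1) * c := by subst ha; linarith
        rw [this, mul_smul, hs, smul_zero]
      rw [h2, hzf]
      linear_combination (norm := module) -hX + h3 - hZ
    · have h3 : P ∈ ((V.powersetCard 2).erase g).erase f :=
        Finset.mem_erase.2 ⟨h2, Finset.mem_erase.2 ⟨h1, hP⟩⟩
      rw [hz P h3, hz0 P h3]
  · rw [← Finset.add_sum_erase _ _ hg, ← Finset.add_sum_erase _ _ hf', hzg, hzf,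
      Finset.sum_congr rfl hz]
    abel

lemma pres_equiv {G T : Type} [AddCommGroup G] [AddCommGroup T] (V : Finset ℕ) (α β : ℕ)
    (hαβ : α ≠ β) (hα : α ∉ V) (hβ : β ∉ V) (k a r c : ℤ)
    (hk : (V.card : ℤ) = k) (hc : 2 * c = (k - 1) * (k - 2)) (ha : a = c + k - 2)
    (hr : r = a + k) (g f : Finset ℕ)
    (hg : g ∈ V.powersetCard 2) (hf : f ∈ V.powersetCard 2) (hgf : f ≠ g)
    (e : Finset ℕ → G) (he : KRel (insert α (insert β V)) a e)
    (hlift : ∀ e' : Finset ℕ → T, KRel (insert α (insert β V)) a e' →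
      ∃ φ : G →+ T, ∀ B ∈ (insert α (insert β V)).powersetCard 2, φ (e B) = e' B)
    (hext : ∀ φ : G →+ G,
      (∀ B ∈ (insert α (insert β V)).powersetCard 2, φ (e B) = e B) → ∀ t, φ t = t)
    (y : T) (x : ℕ → T) (σ : T) (z0 : Finset ℕ → T)
    (hx : ∀ i ∈ V, (a * r) • x i = 0) (hs : c • σ = 0)
    (hz0 : ∀ P ∈ ((V.powersetCard 2).erase g).erase f, a • z0 P = 0)
    (hTlift : ∀ (y' : G) (x' : ℕ → G) (σ' : G) (z' : Finset ℕ → G),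
      (∀ i ∈ V, (a * r) • x' i = 0) → c • σ' = 0 →
      (∀ P ∈ ((V.powersetCard 2).erase g).erase f, a • z' P = 0) →
      ∃ ψ : T →+ G, ψ y = y' ∧ (∀ i ∈ V, ψ (x i) = x' i) ∧ ψ σ = σ' ∧
        ∀ P ∈ ((V.powersetCard 2).erase g).erase f, ψ (z0 P) = z' P)
    (hText : ∀ φ : T →+ T, φ y = y → (∀ i ∈ V, φ (x i) = x i) → φ σ = σ →
      (∀ P ∈ ((V.powersetCard 2).erase g).erase f, φ (z0 P) = z0 P) → ∀ t, φ t = t) :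
    Nonempty (G ≃+ T) := by
  have hf' : f ∈ (V.powersetCard 2).erase g := Finset.mem_erase.2 ⟨hgf, hf⟩
  have hsub : V ⊆ insert α (insert β V) :=
    (Finset.subset_insert _ _).trans (Finset.subset_insert _ _)
  have hgm := Finset.mem_powersetCard.1 hg
  -- the elements of `T`
  obtain ⟨z, hzdef⟩ : ∃ z : Finset ℕ → T, z = fun P => if P = g then 0 else if P = f then
    -(r • ∑ i ∈ V, x i) + (k - 1) • σ
      - ∑ P ∈ ((V.powersetCard 2).erase g).erase f, z0 P else z0 P := ⟨_, rfl⟩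
  have hzg : z g = 0 := by simp [hzdef]
  have hzf : z f = -(r • ∑ i ∈ V, x i) + (k - 1) • σ
      - ∑ P ∈ ((V.powersetCard 2).erase g).erase f, z0 P := by simp [hzdef, hgf]
  have hzz : ∀ P ∈ ((V.powersetCard 2).erase g).erase f, z P = z0 P := by
    intro P hP
    simp only [Finset.mem_erase] at hP
    simp [hzdef, hP.1, hP.2.1]
  have hT2 := z_extend V k a r c hc ha σ x z z0 g f hg hf hgf hx hs hz0 hzg hzf hzz
  obtain ⟨q, hq⟩ : ∃ q : ℕ → T, ∀ i, q i =
    -(r • x i) - incSum V z i + x i + σ - ∑ i ∈ V, x i - y := ⟨_, fun _ => rfl⟩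
  obtain ⟨eT, heT⟩ : ∃ eT : Finset ℕ → T, eT = fun B =>
    if α ∈ B then (if β ∈ B then σ - ∑ i ∈ V, x i - y else ∑ i ∈ B.erase α, (x i - y))
    else if β ∈ B then ∑ i ∈ B.erase β, q i else z B + ∑ i ∈ B, x i - y := ⟨_, rfl⟩
  have eTw : eT {α, β} = σ - ∑ i ∈ V, x i - y := by simp [heT]
  have eTp : ∀ i ∈ V, eT {α, i} = x i - y := by
    intro i hi
    have h1 : α ≠ i := fun h => hα (h ▸ hi)
    have h2 : β ≠ i := fun h => hβ (h ▸ hi)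
    have h3 : ({α, i} : Finset ℕ).erase α = {i} := Finset.erase_insert (by simpa using h1)
    simp [heT, h2, hαβ.symm, h3]
  have eTq : ∀ i ∈ V, eT {β, i} = q i := by
    intro i hi
    have h1 : α ≠ i := fun h => hα (h ▸ hi)
    have h2 : β ≠ i := fun h => hβ (h ▸ hi)
    have h3 : ({β, i} : Finset ℕ).erase β = {i} := Finset.erase_insert (by simpa using h2)
    simp [heT, h1, hαβ, h3]
  have eTf : ∀ P ∈ V.powersetCard 2, eT P = z P + ∑ i ∈ P, x i - y := by
    intro P hP
    have hPm := (Finset.mem_powersetCard.1 hP).1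
    have h1 : α ∉ P := fun h => hα (hPm h)
    have h2 : β ∉ P := fun h => hβ (hPm h)
    simp [heT, h1, h2]
  have hTrel : KRel (insert α (insert β V)) a eT := by
    rw [rel_iff V α β hαβ hα hβ]
    exact pres_forward V k a r c hk hc ha hr y σ _ x _ _ z _ hT2 eTw eTp
      (fun i hi => by rw [eTq i hi, hq]) eTf
  obtain ⟨φ, hφ⟩ := hlift eT hTrel
  -- the elements of `G`
  obtain ⟨yG, hyG⟩ : ∃ yG : G, yG = e g - ∑ i ∈ g, e {α, i} := ⟨_, rfl⟩
  obtain ⟨xG, hxG⟩ : ∃ xG : ℕ → G, ∀ i, xG i = e {α, i} + yG := ⟨_, fun _ => rfl⟩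
  obtain ⟨sG, hsG⟩ : ∃ sG : G, sG = e {α, β} + yG + ∑ i ∈ V, xG i := ⟨_, rfl⟩
  obtain ⟨zG, hzG⟩ : ∃ zG : Finset ℕ → G, ∀ P, zG P = e P - ∑ i ∈ P, xG i + yG :=
    ⟨_, fun _ => rfl⟩
  rw [rel_iff V α β hαβ hα hβ] at he
  obtain ⟨hG2, hqG⟩ := pres_backward V k a r c hk hc ha hr yG sG _ xG _ _ zG _ he g hg hyG
    (fun i _ => hxG i) hsG (fun P _ => hzG P)
  obtain ⟨ψ, hψy, hψx, hψs, hψz⟩ := hTlift yG xG sG zG hG2.hx hG2.hs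
    (fun P hP => hG2.hz P (Finset.mem_of_mem_erase (Finset.mem_of_mem_erase hP)))
  have hψX : ψ (∑ i ∈ V, x i) = ∑ i ∈ V, xG i := by
    rw [map_sum]; exact Finset.sum_congr rfl hψx
  have hzGg : zG g = 0 := by
    rw [hzG, Finset.sum_congr rfl fun i _ => hxG i, Finset.sum_add_distrib, Finset.sum_const,
      hgm.2]
    linear_combination (norm := module) -hyG
  have hψzz : ∀ P ∈ V.powersetCard 2, ψ (z P) = zG P := by
    intro P hP
    by_cases h1 : P = g
    · rw [h1, hzg, hzGg, map_zero]
    by_cases h2 : P = f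
    · have h3 := hG2.hS
      rw [← Finset.add_sum_erase _ _ hg, ← Finset.add_sum_erase _ _ hf', hzGg] at h3
      rw [h2, hzf, map_sub, map_add, map_neg, map_zsmul, map_zsmul, hψX, hψs, map_sum,
        Finset.sum_congr rfl hψz]
      linear_combination (norm := module) -h3
    · have h3 : P ∈ ((V.powersetCard 2).erase g).erase f :=
        Finset.mem_erase.2 ⟨h2, Finset.mem_erase.2 ⟨h1, hP⟩⟩
      rw [hzz P h3, hψz P h3]
  have hψinc : ∀ i, ψ (incSum V z i) = incSum V zG i := by
    intro i
    unfold incSum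
    rw [map_sum]
    exact Finset.sum_congr rfl fun P hP => hψzz P (Finset.mem_filter.1 hP).1
  have mα : ∀ i ∈ V, ({α, i} : Finset ℕ) ∈ (insert α (insert β V)).powersetCard 2 := by
    intro i hi
    have h1 : α ≠ i := fun h => hα (h ▸ hi)
    rw [Finset.mem_powersetCard]
    refine ⟨?_, Finset.card_pair h1⟩
    intro t ht
    simp only [Finset.mem_insert, Finset.mem_singleton] at ht ⊢
    rcases ht with rfl | rfl <;> tauto
  have mαβ : ({α, β} : Finset ℕ) ∈ (insert α (insert β V)).powersetCard 2 := by
    rw [Finset.mem_powersetCard]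
    exact ⟨by intro t; simp; tauto, Finset.card_pair hαβ⟩
  have mP : ∀ P ∈ V.powersetCard 2, P ∈ (insert α (insert β V)).powersetCard 2 :=
    fun P hP => Finset.powersetCard_mono hsub hP
  have c1 : ∀ t, ψ (φ t) = t := by
    refine hext (ψ.comp φ) ?_
    intro B hB
    rw [AddMonoidHom.comp_apply, hφ B hB]
    rcases pairs_cases V α β hαβ B hB with rfl | ⟨i, hi, rfl⟩ | ⟨i, hi, rfl⟩ | hP
    · rw [eTw, map_sub, map_sub, hψs, hψX, hψy, hsG]
      abel
    · rw [eTp i hi, map_sub, hψx i hi, hψy, hxG]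
      abel
    · rw [eTq i hi, hq]
      simp only [map_sub, map_add, map_neg, map_zsmul]
      rw [hψx i hi, hψs, hψX, hψy, hψinc]
      exact (hqG i hi).symm
    · rw [eTf B hP, map_sub, map_add, hψzz B hP, hψy, map_sum,
        Finset.sum_congr rfl fun i hi => hψx i ((Finset.mem_powersetCard.1 hP).1 hi), hzG]
      abel
  have hφy : φ yG = y := by
    rw [hyG, map_sub, map_sum, hφ g (mP g hg), eTf g hg, hzg,
      Finset.sum_congr rfl fun i hi => (hφ _ (mα i (hgm.1 hi))).trans (eTp i (hgm.1 hi)),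
      Finset.sum_sub_distrib, Finset.sum_const, hgm.2]
    module
  have hφx : ∀ i ∈ V, φ (xG i) = x i := by
    intro i hi
    rw [hxG, map_add, hφy, hφ _ (mα i hi), eTp i hi]
    abel
  have c2 : ∀ t, φ (ψ t) = t := by
    refine hText (φ.comp ψ) ?_ ?_ ?_ ?_
    · rw [AddMonoidHom.comp_apply, hψy, hφy]
    · intro i hi
      rw [AddMonoidHom.comp_apply, hψx i hi, hφx i hi]
    · rw [AddMonoidHom.comp_apply, hψs, hsG, map_add, map_add, hφy, hφ _ mαβ, eTw, map_sum,
        Finset.sum_congr rfl hφx]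
      abel
    · intro P hP
      have hP' : P ∈ V.powersetCard 2 := Finset.mem_of_mem_erase (Finset.mem_of_mem_erase hP)
      rw [AddMonoidHom.comp_apply, hψz P hP, hzG, map_add, map_sub, hφy, hφ _ (mP P hP'),
        eTf P hP', map_sum,
        Finset.sum_congr rfl fun i hi => hφx i ((Finset.mem_powersetCard.1 hP').1 hi), hzz P hP]
      abel
  exact ⟨{ φ with invFun := ψ, left_inv := c1, right_inv := c2 }⟩

lemma zmod_lift_exists {A : Type*} [AddCommGroup A] (m : ℕ) (g : A) (h : (m : ℤ) • g = 0) :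
    ∃ φ : ZMod m →+ A, φ 1 = g := by
  refine ⟨ZMod.lift m ⟨zmultiplesHom A g, by simpa using h⟩, ?_⟩
  have := ZMod.lift_coe m (⟨zmultiplesHom A g, by simpa using h⟩ :
    {f : ℤ →+ A // f m = 0}) 1
  simpa using this

lemma zmod_hom_ext {A : Type*} [AddCommGroup A] (m : ℕ) (φ ψ : ZMod m →+ A) (h : φ 1 = ψ 1)
    (t : ZMod m) : φ t = ψ t := by
  obtain ⟨s, rfl⟩ := ZMod.intCast_surjective t
  have : (s : ZMod m) = s • (1 : ZMod m) := by simp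
  rw [this, map_zsmul, map_zsmul, h]

lemma pi_zmod_lift {A ι : Type*} [AddCommGroup A] [Fintype ι] [DecidableEq ι] (m : ℕ) (g : ι → A)
    (h : ∀ i, (m : ℤ) • g i = 0) :
    ∃ φ : (ι → ZMod m) →+ A, ∀ i, φ (Pi.single i 1) = g i := by
  choose F hF using fun i => zmod_lift_exists m (g i) (h i)
  refine ⟨∑ i, (F i).comp (Pi.evalAddMonoidHom (fun _ => ZMod m) i), ?_⟩
  intro i
  rw [AddMonoidHom.finsetSum_apply, Finset.sum_eq_single i]
  · simp [hF]
  · intro j _ hj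
    simp [hj]
  · simp

lemma pi_zmod_ext {A ι : Type*} [AddCommGroup A] [Fintype ι] [DecidableEq ι] (m : ℕ)
    (φ ψ : (ι → ZMod m) →+ A) (h : ∀ i, φ (Pi.single i 1) = ψ (Pi.single i 1)) : φ = ψ := by
  refine AddMonoidHom.functions_ext _ φ ψ ?_
  intro i t
  exact zmod_hom_ext m (φ.comp (AddMonoidHom.single (fun _ => ZMod m) i))
    (ψ.comp (AddMonoidHom.single (fun _ => ZMod m) i)) (h i) t

lemma prod_hom_ext {M N A : Type*} [AddCommGroup M] [AddCommGroup N] [AddCommGroup A]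
    (φ ψ : M × N →+ A) (h1 : φ.comp (AddMonoidHom.inl M N) = ψ.comp (AddMonoidHom.inl M N))
    (h2 : φ.comp (AddMonoidHom.inr M N) = ψ.comp (AddMonoidHom.inr M N)) : φ = ψ := by
  refine AddMonoidHom.ext fun t => ?_
  have h3 := DFunLike.congr_fun h1 t.1
  have h4 := DFunLike.congr_fun h2 t.2
  simp only [AddMonoidHom.comp_apply, AddMonoidHom.inl_apply, AddMonoidHom.inr_apply] at h3 h4
  have h5 : t = (t.1, 0) + (0, t.2) := by simp
  rw [h5, map_add, map_add, h3, h4]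

/-- The Laplacian row relation. -/
lemma row_sum {A : Type*} [AddCommGroup A] (n : ℕ) (hn : 5 ≤ n) (a : ℤ)
    (ha : ((n - 2).choose 2 : ℤ) = a + 1)
    (E : Finset ℕ → A) (R : ↥(ksubsets n 2)) :
    ∑ B : ↥(ksubsets n 2), kneserLap n R B • E B
      = a • E R - ∑ P ∈ (Finset.Icc 1 n).powersetCard 2, E P
        + ∑ i ∈ (R : Finset ℕ), incSum (Finset.Icc 1 n) E i := by
  have hK : ksubsets n 2 = (Finset.Icc 1 n).powersetCard 2 := by
    ext B; simp [ksubsets, Finset.mem_powersetCard]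
  have hR := R.2
  obtain ⟨R, hR'⟩ := R
  simp only at hR ⊢
  have h1 : ∀ B : ↥(ksubsets n 2), kneserLap n ⟨R, hR'⟩ B • E B =
      (fun P : Finset ℕ => (if R = P then a • E P else 0) - E P
        + ∑ i ∈ R, if i ∈ P then E P else 0) B := by
    rintro ⟨P, hP⟩
    simp only [kneserLap, Matrix.of_apply, Subtype.mk.injEq]
    rw [hK, Finset.mem_powersetCard] at hP hR
    have h2 : ∑ i ∈ R, (if i ∈ P then E P else 0) = (((R ∩ P).card : ℕ) : ℤ) • E P := by
      rw [← Finset.sum_filter, Finset.filter_mem_eq_inter, Finset.sum_const, natCast_zsmul]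
    rw [h2]
    by_cases h3 : R = P
    · subst h3
      simp only [if_true, Finset.inter_self, hP.2]
      rw [ha]
      push_cast
      module
    · rw [if_neg h3, if_neg h3]
      by_cases h4 : R ∩ P = ∅
      · rw [if_pos h4, h4]
        simp
      · rw [if_neg h4]
        have h5 : (R ∩ P).card = 1 := by
          have h6 : 0 < (R ∩ P).card := Finset.card_pos.2 (Finset.nonempty_iff_ne_empty.2 h4)
          have h7 : (R ∩ P).card ≤ 2 := hR.2 ▸ Finset.card_le_card Finset.inter_subset_left
          have h8 : (R ∩ P).card ≠ 2 := by
            intro h8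
            have h9 := Finset.eq_of_subset_of_card_le (Finset.inter_subset_left (s₁ := R) (s₂ := P))
              (by rw [h8, hR.2])
            have h10 := Finset.eq_of_subset_of_card_le
              (Finset.inter_subset_right (s₁ := R) (s₂ := P)) (by rw [h8, hP.2])
            exact h3 (h9.symm.trans h10)
          omega
        rw [h5]
        simp
  rw [Finset.sum_congr rfl fun B _ => h1 B, Finset.sum_coe_sort (ksubsets n 2)
      (fun P : Finset ℕ => (if R = P then a • E P else 0) - E P
        + ∑ i ∈ R, if i ∈ P then E P else 0), hK,
    Finset.sum_add_distrib, Finset.sum_sub_distrib, Finset.sum_comm, Finset.sum_ite_eq,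
    if_pos (hK ▸ hR)]
  unfold incSum
  simp_rw [Finset.sum_filter]

/-- With `2a = (n−1)(n−4)`, `4b = (n−1)(n−3)(n−4)n` and `2c = (n−3)(n−4)`:
`S(L(K(n,2))) ≅ ℤ ⊕ (ℤ/aℤ)^{C(n,2)−2n+1} ⊕ (ℤ/bℤ)^{n−2} ⊕ ℤ/cℤ`. -/
theorem statement17 (n : ℕ) (hn : 5 ≤ n) (a b c : ℕ)
    (ha : 2 * a = (n - 1) * (n - 4))
    (hb : 4 * b = (n - 1) * (n - 3) * (n - 4) * n)
    (hc : 2 * c = (n - 3) * (n - 4)) :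
    Nonempty (SmithGroup (kneserLap n) ≃+
      (ℤ × (Fin (n.choose 2 - 2 * n + 1) → ZMod a) ×
        (Fin (n - 2) → ZMod b) × ZMod c)) := by
  -- numerical facts
  have ha' : 2 * (a : ℤ) = (n - 1) * (n - 4) := by
    have := congrArg (Nat.cast : ℕ → ℤ) ha
    push_cast [Nat.cast_sub (show 1 ≤ n by omega), Nat.cast_sub (show 4 ≤ n by omega)] at this
    exact this
  have hb' : 4 * (b : ℤ) = (n - 1) * (n - 3) * (n - 4) * n := by
    have := congrArg (Nat.cast : ℕ → ℤ) hb
    push_cast [Nat.cast_sub (show 1 ≤ n by omega), Nat.cast_sub (show 4 ≤ n by omega),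
      Nat.cast_sub (show 3 ≤ n by omega)] at this
    exact this
  have hc' : 2 * (c : ℤ) = (n - 3) * (n - 4) := by
    have := congrArg (Nat.cast : ℕ → ℤ) hc
    push_cast [Nat.cast_sub (show 4 ≤ n by omega),
      Nat.cast_sub (show 3 ≤ n by omega)] at this
    exact this
  have hbr : (b : ℤ) = a * (a + (n - 2)) := by
    have : 4 * (b : ℤ) = 4 * (a * (a + (n - 2))) := by
      linear_combination hb' - (2 * (a : ℤ) + (n - 1) * (n - 4) + 2 * (n - 2)) * ha'
    linarith
  have hch : ∀ m : ℕ, 1 ≤ m → 2 * ((m.choose 2 : ℕ) : ℤ) = m * (m - 1) := by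
    intro m hm
    have h2 : 2 * m.choose 2 = m * (m - 1) := by
      rw [Nat.choose_two_right]
      exact Nat.mul_div_cancel' (Nat.even_mul_pred_self _).two_dvd
    have := congrArg (Nat.cast : ℕ → ℤ) h2
    push_cast [Nat.cast_sub hm] at this
    exact this
  have hn2 : ((n - 2 : ℕ) : ℤ) = n - 2 := by
    push_cast [Nat.cast_sub (show 2 ≤ n by omega)]; ring
  have hC2 := hch (n - 2) (by omega)
  rw [hn2] at hC2
  have hCn := hch n (by omega)
  have hd : ((n - 2).choose 2 : ℤ) = a + 1 := by linarith
  -- vertices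
  obtain ⟨V, hV⟩ : ∃ V : Finset ℕ, V = Finset.Icc 1 (n - 2) := ⟨_, rfl⟩
  have hVc : V.card = n - 2 := by simp [hV]
  have hins : insert (n - 1) (insert n V) = Finset.Icc 1 n := by
    ext t; simp only [hV, Finset.mem_insert, Finset.mem_Icc]; omega
  have hK : ksubsets n 2 = (Finset.Icc 1 n).powersetCard 2 := by
    ext B; simp [ksubsets, Finset.mem_powersetCard]
  have hg : ({1, 2} : Finset ℕ) ∈ V.powersetCard 2 := by
    rw [Finset.mem_powersetCard]
    refine ⟨?_, rfl⟩
    intro t; simp only [hV, Finset.mem_insert, Finset.mem_singleton, Finset.mem_Icc]; omega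
  have hf : ({1, 3} : Finset ℕ) ∈ V.powersetCard 2 := by
    rw [Finset.mem_powersetCard]
    refine ⟨?_, rfl⟩
    intro t; simp only [hV, Finset.mem_insert, Finset.mem_singleton, Finset.mem_Icc]; omega
  have hgf : ({1, 3} : Finset ℕ) ≠ {1, 2} := by decide
  obtain ⟨I, hI⟩ : ∃ I : Finset (Finset ℕ),
    I = ((V.powersetCard 2).erase {1, 2}).erase {1, 3} := ⟨_, rfl⟩
  have hIc : I.card = n.choose 2 - 2 * n + 1 := by
    rw [hI, Finset.card_erase_of_mem (Finset.mem_erase.2 ⟨hgf, hf⟩),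
      Finset.card_erase_of_mem hg, Finset.card_powersetCard, hVc]
    have h1 : (((n - 2).choose 2 : ℕ) : ℤ) + 2 * n = (n.choose 2 : ℕ) + 3 := by linarith
    have h2 : (n - 2).choose 2 + 2 * n = n.choose 2 + 3 := by exact_mod_cast h1
    have h3 : 3 ≤ (n - 2).choose 2 := by
      calc 3 = Nat.choose 3 2 := rfl
        _ ≤ _ := Nat.choose_le_choose 2 (by omega)
    omega
  -- reindexing of the target
  let e1 : Fin (n.choose 2 - 2 * n + 1) ≃ ↥I := (Finset.equivFinOfCardEq hIc).symm
  let e2 : Fin (n - 2) ≃ ↥V := (Finset.equivFinOfCardEq hVc).symm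
  let re : (ℤ × (↥I → ZMod a) × (↥V → ZMod b) × ZMod c) ≃+
      (ℤ × (Fin (n.choose 2 - 2 * n + 1) → ZMod a) × (Fin (n - 2) → ZMod b) × ZMod c) :=
    AddEquiv.prodCongr (AddEquiv.refl _) (AddEquiv.prodCongr
      (LinearEquiv.funCongrLeft ℤ (ZMod a) e1).toAddEquiv
      (AddEquiv.prodCongr (LinearEquiv.funCongrLeft ℤ (ZMod b) e2).toAddEquiv (AddEquiv.refl _)))
  suffices h : Nonempty (SmithGroup (kneserLap n) ≃+
      (ℤ × (↥I → ZMod a) × (↥V → ZMod b) × ZMod c)) from ⟨h.some.trans re⟩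
  -- generators of the Smith group
  obtain ⟨e, he⟩ : ∃ e : Finset ℕ → SmithGroup (kneserLap n), ∀ B : ↥(ksubsets n 2),
      e B = Submodule.Quotient.mk (Pi.single B 1) :=
    ⟨fun B => if h : B ∈ ksubsets n 2 then
      Submodule.Quotient.mk (Pi.single (⟨B, h⟩ : ↥(ksubsets n 2)) (1 : ℤ)) else 0,
      fun B => by simp⟩
  have hvec : ∀ v : ↥(ksubsets n 2) → ℤ,
      (Submodule.Quotient.mk v : SmithGroup (kneserLap n)) = ∑ B, v B • e B := by
    intro v
    have h1 : v = ∑ B, v B • Pi.single B (1 : ℤ) := by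
      ext t
      simp [Finset.sum_apply, Pi.single_apply]
    conv_lhs => rw [h1]
    rw [← Submodule.mkQ_apply, map_sum]
    refine Finset.sum_congr rfl fun B _ => ?_
    rw [map_zsmul, Submodule.mkQ_apply, he]
  obtain ⟨x, hx⟩ : ∃ x : ℕ → (ℤ × (↥I → ZMod a) × (↥V → ZMod b) × ZMod c),
      ∀ i : ↥V, x i = (0, 0, Pi.single i 1, 0) :=
    ⟨fun i => if h : i ∈ V then (0, 0, Pi.single ⟨i, h⟩ 1, 0) else 0, fun i => by simp⟩
  obtain ⟨z, hz⟩ : ∃ z : Finset ℕ → (ℤ × (↥I → ZMod a) × (↥V → ZMod b) × ZMod c),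
      ∀ P : ↥I, z P = (0, Pi.single P 1, 0, 0) :=
    ⟨fun P => if h : P ∈ I then (0, Pi.single ⟨P, h⟩ 1, 0, 0) else 0, fun i => by simp⟩
  refine pres_equiv V (n - 1) n (by omega) (by simp [hV]; omega) (by simp [hV]; omega)
    (n - 2) a (a + (n - 2)) c (by rw [hVc, hn2]) (by linarith) (by linarith) rfl {1, 2} {1, 3}
    hg hf hgf e ?_ ?_ ?_ (1, 0, 0, 0) x (0, 0, 0, 1) z ?_ ?_ ?_ ?_ ?_
  · rw [hins]
    intro B hB
    have h1 := row_sum n hn a hd e ⟨B, hK ▸ hB⟩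
    have h2 : (Submodule.Quotient.mk (kneserLap n ⟨B, hK ▸ hB⟩) : SmithGroup (kneserLap n)) = 0 :=
      (Submodule.Quotient.mk_eq_zero _).2 (Submodule.subset_span ⟨⟨B, hK ▸ hB⟩, rfl⟩)
    rw [← hvec, h2] at h1
    simp only at h1
    linear_combination (norm := module) -h1
  · rw [hins]
    intro e' he'
    let Φ : (↥(ksubsets n 2) → ℤ) →ₗ[ℤ] _ :=
      Fintype.linearCombination ℤ (fun B : ↥(ksubsets n 2) => e' B)
    have hΦ : Submodule.span ℤ (Set.range fun r => kneserLap n r) ≤ LinearMap.ker Φ := by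
      rw [Submodule.span_le]
      rintro _ ⟨R, rfl⟩
      simp only [SetLike.mem_coe, LinearMap.mem_ker]
      have h1 := row_sum n hn a hd e' R
      have h2 := he' R (hK ▸ R.2)
      rw [h2] at h1
      rw [Fintype.linearCombination_apply, h1]
      abel
    refine ⟨(Submodule.liftQ _ Φ hΦ).toAddMonoidHom, ?_⟩
    intro B hB
    have h1 := he ⟨B, hK ▸ hB⟩
    simp only at h1
    rw [h1]
    change Submodule.liftQ _ Φ hΦ (Submodule.Quotient.mk _) = _
    rw [Submodule.liftQ_apply, Fintype.linearCombination_apply_single, one_smul]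
  · rw [hins]
    intro φ hφ t
    obtain ⟨v, rfl⟩ := Submodule.Quotient.mk_surjective _ t
    rw [hvec, map_sum]
    refine Finset.sum_congr rfl fun B _ => ?_
    rw [map_zsmul, hφ B (hK ▸ B.2)]
  · intro i hi
    have h1 := hx ⟨i, hi⟩
    simp only at h1
    rw [← hbr, h1]
    ext j
    · simp
    · simp
    · simp
    · simp
  · simp
  · rw [← hI]
    intro P hP
    have h1 := hz ⟨P, hP⟩
    simp only at h1
    rw [h1]
    ext j
    · simp
    · simp
    · simp
    · simp
  · rw [← hI]
    intro y' x' σ' z' hx' hσ' hz'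
    obtain ⟨f1, h1⟩ := pi_zmod_lift a (fun P : ↥I => z' P) (fun P => hz' P P.2)
    obtain ⟨f2, h2⟩ := pi_zmod_lift b (fun i : ↥V => x' i) (fun i => by rw [hbr]; exact hx' i i.2)
    obtain ⟨f3, h3⟩ := zmod_lift_exists c σ' hσ'
    refine ⟨(zmultiplesHom _ y').coprod (f1.coprod (f2.coprod f3)), ?_, ?_, ?_, ?_⟩
    · simp
    · intro i hi
      have := hx ⟨i, hi⟩
      simp only at this
      rw [this]
      simp [h2]
    · simp [h3]
    · intro P hP
      have := hz ⟨P, hP⟩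
      simp only at this
      rw [this]
      simp [h1]
  · rw [← hI]
    intro φ p0 p1 p2 p3
    have H : φ = AddMonoidHom.id _ := by
      refine prod_hom_ext _ _ ?_ (prod_hom_ext _ _ ?_ (prod_hom_ext _ _ ?_ ?_))
      · refine AddMonoidHom.ext_int ?_
        exact p0
      · refine pi_zmod_ext a _ _ fun P => ?_
        have := p3 P P.2
        rw [hz] at this
        exact this
      · refine pi_zmod_ext b _ _ fun i => ?_
        have := p1 i i.2
        rw [hx] at this
        exact this
      · refine AddMonoidHom.ext fun t => zmod_hom_ext c _ _ ?_ t
        exact p2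
    intro t
    rw [H]; rfl
end

section
/- Let n ≥ 5 be an integer. Then the Smith group of the subset intersection matrix A_{n,2,3,1} satisfies S(A_{n,2,3,1}) ≅ ℤ^{C(n,3)−C(n,2)} ⊕ (ℤ/2ℤ)^{C(n,2)−2n+1} ⊕ (ℤ/2(n−6)ℤ)^{n−2} ⊕ T, where T = ℤ/(n−3)(n−6)ℤ ⊕ ℤ/6ℤ if 3 divides n, and T = ℤ/3(n−3)(n−6)ℤ ⊕ ℤ/2ℤ otherwise; here ℤ/0ℤ is understood to be ℤ. -/
open scoped Classical

/-- The subset intersection matrix `A_{n,kr,kc,ℓ}`; `A_{n,2,3,1}` has rows indexed by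
2-subsets, columns by 3-subsets, entry `1` exactly when they meet in one element. -/
noncomputable def interMat (n kr kc ℓ : ℕ) :
    Matrix ↥(ksubsets n kr) ↥(ksubsets n kc) ℤ :=
  Matrix.of fun A B => if ((A : Finset ℕ) ∩ (B : Finset ℕ)).card = ℓ then 1 else 0

/-! ### Vectors on triples -/

abbrev Tri (n : ℕ) := ↥(ksubsets n 3)

def vJ (n : ℕ) : Tri n → ℤ := fun _ => 1
noncomputable def vV (n : ℕ) (i : ℕ) : Tri n → ℤ := fun B => if i ∈ B.1 then 1 else 0
noncomputable def vU (n : ℕ) (e : Finset ℕ) : Tri n → ℤ := fun B => if e ⊆ B.1 then 1 else 0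
noncomputable def vM (n : ℕ) (e : Finset ℕ) : Tri n → ℤ :=
  fun B => if (e ∩ B.1).card = 1 then 1 else 0
noncomputable def vD (n : ℕ) (S : Finset ℕ) : Tri n → ℤ := fun B => if B.1 = S then 1 else 0
noncomputable def vE (n : ℕ) (i : ℕ) : Tri n → ℤ := ((n : ℤ) - 6) • vV n i + (3 : ℤ) • vJ n

lemma mem_ks {n k : ℕ} {A : Finset ℕ} : A ∈ ksubsets n k ↔ A ⊆ Finset.Icc 1 n ∧ A.card = k := by
  simp [ksubsets]

lemma ks_eq (n k : ℕ) : ksubsets n k = Finset.powersetCard k (Finset.Icc 1 n) := by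
  ext A; simp [mem_ks, Finset.mem_powersetCard]

lemma tri_card {n : ℕ} (B : Tri n) : B.1.card = 3 := (mem_ks.1 B.2).2
lemma tri_sub {n : ℕ} (B : Tri n) : B.1 ⊆ Finset.Icc 1 n := (mem_ks.1 B.2).1

lemma vM_eq (n : ℕ) {i j : ℕ} (h : i ≠ j) :
    vM n {i, j} = vV n i + vV n j - (2 : ℤ) • vU n {i, j} := by
  funext B
  simp only [vM, vV, vU, Pi.add_apply, Pi.sub_apply, Pi.smul_apply, smul_eq_mul,
    Finset.insert_subset_iff, Finset.singleton_subset_iff]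
  by_cases hi : i ∈ B.1 <;> by_cases hj : j ∈ B.1 <;>
    simp [hi, hj, Finset.insert_inter_of_mem, Finset.insert_inter_of_notMem,
      Finset.singleton_inter_of_mem, Finset.singleton_inter_of_notMem, Finset.card_pair h]

lemma sum_ind {n : ℕ} (s : Finset ℕ) (B : Tri n) :
    ∑ i ∈ s, (if i ∈ B.1 then (1 : ℤ) else 0) = ((s ∩ B.1).card : ℤ) := by
  rw [Finset.sum_boole, Finset.filter_mem_eq_inter]

lemma sum_vV (n : ℕ) : ∑ i ∈ Finset.Icc 1 n, vV n i = (3 : ℤ) • vJ n := by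
  funext B
  simp only [Finset.sum_apply, vV, vJ, Pi.smul_apply, smul_eq_mul]
  rw [sum_ind, Finset.inter_eq_right.2 (tri_sub B), tri_card]; rfl

lemma sum_vU (n i : ℕ) :
    ∑ j ∈ (Finset.Icc 1 n).erase i, vU n {i, j} = (2 : ℤ) • vV n i := by
  funext B
  simp only [Finset.sum_apply, vV, vU, Pi.smul_apply, smul_eq_mul,
    Finset.insert_subset_iff, Finset.singleton_subset_iff]
  by_cases hi : i ∈ B.1
  · simp only [hi, true_and, if_true]
    rw [sum_ind, Finset.erase_inter, Finset.inter_eq_right.2 (tri_sub B),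
      Finset.card_erase_of_mem hi, tri_card]; rfl
  · simp [hi]

lemma icc_erase_one (n : ℕ) : (Finset.Icc 1 n).erase 1 = Finset.Icc 2 n := by
  ext x; simp; omega

lemma sum_vU_Y (n : ℕ) :
    ∑ e ∈ Finset.powersetCard 2 (Finset.Icc 2 n), vU n e = (3 : ℤ) • vJ n - (2 : ℤ) • vV n 1 := by
  funext B
  simp only [Finset.sum_apply, vV, vU, vJ, Pi.smul_apply, smul_eq_mul, Pi.sub_apply]
  rw [Finset.sum_boole]
  have : (Finset.powersetCard 2 (Finset.Icc 2 n)).filter (fun e => e ⊆ B.1)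
      = Finset.powersetCard 2 (B.1.erase 1) := by
    ext e
    simp only [Finset.mem_filter, Finset.mem_powersetCard]
    have hB := tri_sub B
    rw [← icc_erase_one]
    simp only [Finset.subset_erase]
    constructor
    · rintro ⟨⟨⟨h1, h2⟩, h3⟩, h4⟩; exact ⟨⟨h4, h2⟩, h3⟩
    · rintro ⟨⟨h1, h2⟩, h3⟩; exact ⟨⟨⟨h1.trans hB, h2⟩, h3⟩, h1⟩
  rw [this, Finset.card_powersetCard]
  by_cases h : 1 ∈ B.1
  · simp [Finset.card_erase_of_mem h, tri_card, h]
  · simp [tri_card, h]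

lemma sum_pairs {G : Type*} [AddCommGroup G] (g : ℕ → G) (Y : Finset ℕ) :
    ∑ e ∈ Finset.powersetCard 2 Y, ∑ i ∈ e, g i = ((Y.card : ℤ) - 1) • ∑ i ∈ Y, g i := by
  induction Y using Finset.induction_on with
  | empty => rw [Finset.powersetCard_eq_empty.2 (by simp)]; simp
  | insert a s ha ih =>
    rw [Finset.powersetCard_succ_insert ha, Finset.sum_union, ih, Finset.sum_image,
      Finset.sum_insert ha, Finset.card_insert_of_notMem ha]
    · rw [Finset.powersetCard_one, Finset.sum_map]
      have : ∀ x ∈ s, ∑ i ∈ insert a ({x} : Finset ℕ), g i = g a + g x := by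
        intro x hx
        rw [Finset.sum_insert, Finset.sum_singleton]
        simp; rintro rfl; exact ha hx
      simp only [Function.Embedding.coeFn_mk]
      rw [Finset.sum_congr rfl this, Finset.sum_add_distrib, Finset.sum_const]
      push_cast
      module
    · intro x hx y hy h
      simp only [Finset.mem_coe,
        Finset.mem_powersetCard] at hx hy
      have hx' : a ∉ x := fun h => ha (hx.1 h)
      have hy' : a ∉ y := fun h => ha (hy.1 h)
      rw [← Finset.erase_insert hx', ← Finset.erase_insert hy', h]
    · rw [Finset.disjoint_left]
      intro e he he'
      simp only [Finset.mem_powersetCard, Finset.mem_image] at he he'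
      obtain ⟨x, hx, rfl⟩ := he'
      exact ha (he.1 (Finset.mem_insert_self _ _))

lemma sum_vM (n i : ℕ) (hi : i ∈ Finset.Icc 1 n) :
    ∑ j ∈ (Finset.Icc 1 n).erase i, vM n {i, j} = vE n i := by
  have h1 : ∀ j ∈ (Finset.Icc 1 n).erase i,
      vM n {i, j} = vV n i + vV n j - (2 : ℤ) • vU n {i, j} := fun j hj =>
    vM_eq n (Finset.ne_of_mem_erase hj).symm
  have h2 := sum_vV n
  rw [← Finset.add_sum_erase _ _ hi] at h2
  have h3 : ∑ j ∈ (Finset.Icc 1 n).erase i, vV n j = (3 : ℤ) • vJ n - vV n i := by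
    rw [← h2]; abel
  rw [Finset.sum_congr rfl h1, Finset.sum_sub_distrib, Finset.sum_add_distrib, h3,
    ← Finset.smul_sum, sum_vU, Finset.sum_const, Finset.card_erase_of_mem hi, Nat.card_Icc, vE]
  have : 1 ≤ n := by simp at hi; omega
  rw [← natCast_zsmul]
  push_cast [show n + 1 - 1 - 1 = n - 1 by omega, Nat.cast_sub this]
  module

lemma vM_eq' (n : ℕ) {e : Finset ℕ} (h : e.card = 2) :
    vM n e = ∑ i ∈ e, vV n i - (2 : ℤ) • vU n e := by
  obtain ⟨i, j, hij, rfl⟩ := Finset.card_eq_two.1 h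
  rw [vM_eq n hij, Finset.sum_pair hij]

lemma sum_vV_Y (n : ℕ) (hn : 1 ≤ n) :
    ∑ i ∈ Finset.Icc 2 n, vV n i = (3 : ℤ) • vJ n - vV n 1 := by
  rw [← sum_vV, ← icc_erase_one, ← Finset.add_sum_erase _ _ (show 1 ∈ Finset.Icc 1 n by simp [hn])]
  abel

lemma sum_vM_Y (n : ℕ) (hn : 1 ≤ n) :
    ∑ e ∈ Finset.powersetCard 2 (Finset.Icc 2 n), vM n e
      = (3 * ((n : ℤ) - 3)) • vJ n - vE n 1 := by
  rw [Finset.sum_congr rfl fun e he => vM_eq' n (Finset.mem_powersetCard.1 he).2,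
    Finset.sum_sub_distrib, sum_pairs, ← Finset.smul_sum, sum_vU_Y, sum_vV_Y n hn, vE, Nat.card_Icc]
  push_cast [show n + 1 - 2 = n - 1 by omega, Nat.cast_sub hn]
  module

lemma sum_vE (n : ℕ) : ∑ i ∈ Finset.Icc 1 n, vE n i = (6 * ((n : ℤ) - 3)) • vJ n := by
  simp only [vE]
  rw [Finset.sum_add_distrib, ← Finset.smul_sum, sum_vV, Finset.sum_const, Nat.card_Icc,
    ← natCast_zsmul]
  push_cast [show n + 1 - 1 = n by omega]
  module

/-! ### The adapted family -/

def PS (n : ℕ) : Finset (Finset ℕ) :=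
  (Finset.powersetCard 2 (Finset.Icc 2 (n - 1))).erase {2, 3}

noncomputable def vP (n : ℕ) (e : Finset ℕ) : Tri n → ℤ :=
  vU n e - ∑ i ∈ e, vU n {i, n} + vV n n

noncomputable def vW (n : ℕ) (j : ℕ) : Tri n → ℤ := vU n {j, n} - vV n n

def NS (n : ℕ) : Finset (Finset ℕ) :=
  (Finset.powersetCard 2 (Finset.Icc 2 n)).image (insert 1) ∪
    ((Finset.Icc 4 n).image (fun c => {2, 3, c}) ∪ {{2, 4, 5}, {3, 4, 5}})

def SS (n : ℕ) : Finset (Finset ℕ) := ksubsets n 3 \ NS n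

lemma mem_NS {n : ℕ} (_hn : 5 ≤ n) {T : Finset ℕ} (hT : T ∈ ksubsets n 3) :
    T ∈ NS n ↔ (1 ∈ T ∨ (∃ c ∈ Finset.Icc 4 n, T = {2, 3, c}) ∨ T = {2, 4, 5} ∨ T = {3, 4, 5}) := by
  have hT := mem_ks.1 hT
  simp only [NS, Finset.mem_union, Finset.mem_image, Finset.mem_insert, Finset.mem_singleton,
    Finset.mem_powersetCard]
  apply or_congr
  · constructor
    · rintro ⟨e, he, rfl⟩; exact Finset.mem_insert_self _ _
    · intro h
      refine ⟨T.erase 1, ⟨?_, ?_⟩, Finset.insert_erase h⟩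
      · rw [← icc_erase_one]; exact Finset.erase_subset_erase _ hT.1
      · rw [Finset.card_erase_of_mem h, hT.2]
  · apply or_congr
    · simp only [eq_comm]
    · rfl

lemma mem_of_support {n : ℕ} (H : Submodule ℤ (Tri n → ℤ)) (f : Tri n → ℤ)
    (h : ∀ B : Tri n, vD n B.1 ∈ H ∨ f B = 0) : f ∈ H := by
  have : f = ∑ B : Tri n, f B • vD n B.1 := by
    funext C
    simp only [Finset.sum_apply, Pi.smul_apply, vD, smul_eq_mul, mul_ite, mul_one, mul_zero]
    rw [Finset.sum_eq_single C]
    · simp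
    · intro B _ hB
      rw [if_neg]; intro h; exact hB (Subtype.ext h.symm)
    · simp
  rw [this]
  refine Submodule.sum_mem _ fun B _ => ?_
  rcases h B with h | h
  · exact H.smul_mem _ h
  · rw [h, zero_smul]; exact H.zero_mem

lemma top_of_mem {n : ℕ} (hn : 5 ≤ n) (H : Submodule ℤ (Tri n → ℤ))
    (hJ : vJ n ∈ H) (hvn : vV n n ∈ H)
    (hA : ∀ j ∈ Finset.Icc 2 (n - 1), vM n {j, n} ∈ H)
    (hW : ∀ j ∈ Finset.Icc 2 (n - 1), vW n j ∈ H)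
    (hP : ∀ e ∈ PS n, vP n e ∈ H)
    (hS : ∀ T ∈ SS n, vD n T ∈ H) : H = ⊤ := by
  -- the vectors `U_{jn}`
  have hUn : ∀ j ∈ Finset.Icc 2 (n - 1), vU n {j, n} ∈ H := fun j hj => by
    have := H.add_mem (hW j hj) hvn
    simpa [vW] using this
  have hV' : ∀ j ∈ Finset.Icc 2 n, vV n j ∈ H := fun j hj => by
    rw [Finset.mem_Icc] at hj
    by_cases hjn : j = n
    · exact hjn ▸ hvn
    have hj' : j ∈ Finset.Icc 2 (n - 1) := by rw [Finset.mem_Icc]; omega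
    have h1 := vM_eq n hjn
    have h2 : vV n j = vM n {j, n} - vV n n + (2 : ℤ) • vU n {j, n} := by rw [h1]; module
    rw [h2]
    exact H.add_mem (H.sub_mem (hA j hj') hvn) (H.smul_mem _ (hUn j hj'))
  have hV1 : vV n 1 ∈ H := by
    have h1 := sum_vV_Y n (by omega)
    have h2 : vV n 1 = (3 : ℤ) • vJ n - ∑ i ∈ Finset.Icc 2 n, vV n i := by rw [h1]; abel
    rw [h2]
    exact H.sub_mem (H.smul_mem _ hJ) (Submodule.sum_mem _ hV')
  have hUP : ∀ e ∈ (Finset.powersetCard 2 (Finset.Icc 2 n)).erase {2, 3}, vU n e ∈ H := by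
    intro e he
    obtain ⟨hne, he⟩ := Finset.mem_erase.1 he
    obtain ⟨hs, hc⟩ := Finset.mem_powersetCard.1 he
    by_cases hin : n ∈ e
    · obtain ⟨j, hj⟩ := Finset.card_eq_one.1
        (show (e.erase n).card = 1 by rw [Finset.card_erase_of_mem hin, hc])
      have hje : j ∈ e.erase n := by rw [hj]; simp
      have he2 : e = {j, n} := by
        rw [← Finset.insert_erase hin, hj, Finset.pair_comm]
      have := Finset.mem_Icc.1 (hs (Finset.mem_of_mem_erase hje))
      have := Finset.ne_of_mem_erase hje
      rw [he2]
      exact hUn j (Finset.mem_Icc.2 (by omega))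
    · have hs' : ∀ i ∈ e, i ∈ Finset.Icc 2 (n - 1) := fun i hi => by
        have := Finset.mem_Icc.1 (hs hi)
        have : i ≠ n := fun h => hin (h ▸ hi)
        exact Finset.mem_Icc.2 (by omega)
      have h1 := hP e (Finset.mem_erase.2 ⟨hne, Finset.mem_powersetCard.2 ⟨hs', hc⟩⟩)
      have h2 : vU n e = vP n e + ∑ i ∈ e, vU n {i, n} - vV n n := by rw [vP]; abel
      rw [h2]
      exact H.sub_mem (H.add_mem h1 (Submodule.sum_mem _ fun i hi => hUn i (hs' i hi))) hvn
  have h23 : ({2, 3} : Finset ℕ) ∈ Finset.powersetCard 2 (Finset.Icc 2 n) := by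
    rw [Finset.mem_powersetCard]
    refine ⟨?_, by decide⟩
    intro x hx; simp at hx; rw [Finset.mem_Icc]; omega
  have hUY : ∀ e ∈ Finset.powersetCard 2 (Finset.Icc 2 n), vU n e ∈ H := by
    intro e he
    by_cases h : e = {2, 3}
    · have h1 := sum_vU_Y n
      rw [← Finset.add_sum_erase _ _ h23] at h1
      have h2 := eq_sub_of_add_eq h1
      rw [h, h2]
      exact H.sub_mem (H.sub_mem (H.smul_mem _ hJ) (H.smul_mem _ hV1)) (Submodule.sum_mem _ hUP)
    · exact hUP e (Finset.mem_erase.2 ⟨h, he⟩)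
  have hU1 : ∀ j ∈ Finset.Icc 2 n, vU n {1, j} ∈ H := by
    intro j hj
    have hj' := Finset.mem_Icc.1 hj
    have h1 := sum_vU n j
    have hm : 1 ∈ (Finset.Icc 1 n).erase j := by simp; omega
    rw [← Finset.add_sum_erase _ _ hm] at h1
    have h2 := eq_sub_of_add_eq h1
    rw [Finset.pair_comm, h2]
    refine H.sub_mem (H.smul_mem _ (hV' j hj)) (Submodule.sum_mem _ fun k hk => ?_)
    simp only [Finset.mem_erase, Finset.mem_Icc] at hk
    apply hUY
    rw [Finset.mem_powersetCard]
    refine ⟨?_, Finset.card_pair (by omega)⟩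
    intro x hx; simp at hx; rw [Finset.mem_Icc]; omega
  -- triples
  have hstd : ∀ B : Tri n, B.1 ∉ NS n → vD n B.1 ∈ H := fun B hB =>
    hS _ (Finset.mem_sdiff.2 ⟨B.2, hB⟩)
  have e1 : vD n {3, 4, 5} ∈ H := by
    have key : vJ n - vV n 1 - vV n 2 + vU n {1, 2} - vD n {3, 4, 5} ∈ H := by
      apply mem_of_support
      intro B
      by_cases hB : B.1 ∈ NS n
      · right
        rcases (mem_NS hn B.2).1 hB with h | ⟨c, hc, h⟩ | h | h
        · have : B.1 ≠ {3, 4, 5} := by intro h'; rw [h'] at h; simp at h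
          simp [vJ, vV, vU, vD, Finset.insert_subset_iff, h, this]
        · have : B.1 ≠ {3, 4, 5} := by
            intro h'; have : 2 ∈ B.1 := by rw [h]; simp
            rw [h'] at this; simp at this
          have h1 : 1 ∉ B.1 := by simp at hc; rw [h]; simp; omega
          have h2 : 2 ∈ B.1 := by rw [h]; simp
          simp [vJ, vV, vU, vD, Finset.insert_subset_iff, h1, h2, this]
        · simp [vJ, vV, vU, vD, h]; decide
        · simp [vJ, vV, vU, vD, h]; decide
      · exact Or.inl (hstd B hB)
    have := H.sub_mem (H.add_mem (H.sub_mem (H.sub_mem hJ hV1) (hV' 2 (by simp; omega)))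
      (hU1 2 (by simp; omega))) key
    simpa using this
  have e2 : vD n {2, 4, 5} ∈ H := by
    have key : vJ n - vV n 1 - vV n 3 + vU n {1, 3} - vD n {2, 4, 5} ∈ H := by
      apply mem_of_support
      intro B
      by_cases hB : B.1 ∈ NS n
      · right
        rcases (mem_NS hn B.2).1 hB with h | ⟨c, hc, h⟩ | h | h
        · have : B.1 ≠ {2, 4, 5} := by intro h'; rw [h'] at h; simp at h
          simp [vJ, vV, vU, vD, Finset.insert_subset_iff, h, this]
        · have : B.1 ≠ {2, 4, 5} := by
            intro h'; have : 3 ∈ B.1 := by rw [h]; simp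
            rw [h'] at this; simp at this
          have h1 : 1 ∉ B.1 := by simp at hc; rw [h]; simp; omega
          have h2 : 3 ∈ B.1 := by rw [h]; simp
          simp [vJ, vV, vU, vD, Finset.insert_subset_iff, h1, h2, this]
        · simp [vJ, vV, vU, vD, h]; decide
        · simp [vJ, vV, vU, vD, h]; decide
      · exact Or.inl (hstd B hB)
    have := H.sub_mem (H.add_mem (H.sub_mem (H.sub_mem hJ hV1) (hV' 3 (by simp; omega)))
      (hU1 3 (by simp; omega))) key
    simpa using this
  have e3 : ∀ c ∈ Finset.Icc 6 n, vD n {2, 3, c} ∈ H := by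
    intro c hc
    have hc' := Finset.mem_Icc.1 hc
    have key : vV n c - vU n {1, c} - vD n {2, 3, c} ∈ H := by
      apply mem_of_support
      intro B
      by_cases hB : B.1 ∈ NS n
      · right
        rcases (mem_NS hn B.2).1 hB with h | ⟨d, hd, h⟩ | h | h
        · have : B.1 ≠ {2, 3, c} := by intro h'; rw [h'] at h; simp at h; omega
          simp [vV, vU, vD, Finset.insert_subset_iff, h, this]
        · have h1 : 1 ∉ B.1 := by simp at hd; rw [h]; simp; omega
          by_cases hcd : c = d
          · subst hcd
            have h2 : c ∈ B.1 := by rw [h]; simp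
            simp [vV, vU, vD, Finset.insert_subset_iff, h]
            omega
          · have h2 : c ∉ B.1 := by rw [h]; simp; omega
            have : B.1 ≠ {2, 3, c} := by intro h'; rw [h'] at h2; simp at h2
            simp [vV, vU, vD, Finset.insert_subset_iff, h2, this]
        · have h2 : c ∉ B.1 := by rw [h]; simp; omega
          have : B.1 ≠ {2, 3, c} := by intro h'; rw [h'] at h2; simp at h2
          simp [vV, vU, vD, Finset.insert_subset_iff, h2, this]
        · have h2 : c ∉ B.1 := by rw [h]; simp; omega
          have : B.1 ≠ {2, 3, c} := by intro h'; rw [h'] at h2; simp at h2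
          simp [vV, vU, vD, Finset.insert_subset_iff, h2, this]
      · exact Or.inl (hstd B hB)
    have := H.sub_mem (H.sub_mem (hV' c (by simp; omega)) (hU1 c (by simp; omega))) key
    simpa using this
  have e45 : ∀ a b : ℕ, (a = 4 ∧ b = 5 ∨ a = 5 ∧ b = 4) → vD n {2, 3, a} ∈ H := by
    intro a b hab
    have key : vJ n - vV n 1 - vV n b + vU n {1, b} - vD n {2, 3, a} ∈ H := by
      apply mem_of_support
      intro B
      by_cases hB : B.1 ∈ NS n
      · rcases (mem_NS hn B.2).1 hB with h | ⟨c, hc, h⟩ | h | h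
        · right
          have : B.1 ≠ {2, 3, a} := by intro h'; rw [h'] at h; simp at h; omega
          simp [vJ, vV, vU, vD, Finset.insert_subset_iff, h, this]
        · have hc' := Finset.mem_Icc.1 hc
          by_cases hc6 : 6 ≤ c
          · left; rw [h]; exact e3 c (Finset.mem_Icc.2 ⟨hc6, hc'.2⟩)
          right
          have h1 : 1 ∉ B.1 := by rw [h]; simp; omega
          by_cases hca : c = a
          · subst hca
            have h2 : b ∉ B.1 := by rw [h]; simp; omega
            simp [vJ, vV, vU, vD, Finset.insert_subset_iff, h]
            omega
          · have hcb : c = b := by omega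
            subst hcb
            have h2 : a ∉ B.1 := by rw [h]; simp; omega
            have h3 : c ∈ B.1 := by rw [h]; simp
            have : B.1 ≠ {2, 3, a} := by intro h'; rw [h'] at h2; simp at h2
            simp [vJ, vV, vU, vD, Finset.insert_subset_iff, h1, h3, this]
        · left; rw [h]; exact e2
        · left; rw [h]; exact e1
      · exact Or.inl (hstd B hB)
    have := H.sub_mem (H.add_mem (H.sub_mem (H.sub_mem hJ hV1) (hV' b (by simp; omega)))
      (hU1 b (by simp; omega))) key
    simpa using this
  have hno1 : ∀ B : Tri n, 1 ∉ B.1 → vD n B.1 ∈ H := by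
    intro B h1
    by_cases hB : B.1 ∈ NS n
    · rcases (mem_NS hn B.2).1 hB with h | ⟨c, hc, h⟩ | h | h
      · exact absurd h h1
      · have hc' := Finset.mem_Icc.1 hc
        rw [h]
        by_cases hc6 : 6 ≤ c
        · exact e3 c (Finset.mem_Icc.2 ⟨hc6, hc'.2⟩)
        · by_cases hc4 : c = 4
          · exact e45 c 5 (by omega)
          · exact e45 c 4 (by omega)
      · rw [h]; exact e2
      · rw [h]; exact e1
    · exact hstd B hB
  have hall : ∀ B : Tri n, vD n B.1 ∈ H := by
    intro B
    by_cases h1 : 1 ∈ B.1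
    · have hcard : (B.1.erase 1).card = 2 := by rw [Finset.card_erase_of_mem h1, tri_card]
      have key : vU n (B.1.erase 1) - vD n B.1 ∈ H := by
        apply mem_of_support
        intro C
        by_cases hC : 1 ∈ C.1
        · right
          simp only [vU, vD, Pi.sub_apply]
          by_cases hs : B.1.erase 1 ⊆ C.1
          · have : C.1 = B.1 := by
              symm
              apply Finset.eq_of_subset_of_card_le
              · rw [← Finset.insert_erase h1]
                exact Finset.insert_subset hC hs
              · rw [tri_card, tri_card]
            simp [this, Finset.erase_subset]
          · have : C.1 ≠ B.1 := by
              intro h; apply hs; rw [h]; exact Finset.erase_subset _ _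
            simp only [if_neg hs, if_neg this]; rfl
        · exact Or.inl (hno1 C hC)
      have hm : B.1.erase 1 ∈ Finset.powersetCard 2 (Finset.Icc 2 n) := by
        rw [Finset.mem_powersetCard, ← icc_erase_one]
        exact ⟨Finset.erase_subset_erase _ (tri_sub B), hcard⟩
      have := H.sub_mem (hUY _ hm) key
      simpa using this
    · exact hno1 B h1
  rw [eq_top_iff]
  intro f _
  exact mem_of_support H f fun B => Or.inl (hall B)

/-! ### Cardinalities -/

lemma card_NS {n : ℕ} (hn : 5 ≤ n) : (NS n).card = n.choose 2 := by
  obtain ⟨m, rfl⟩ : ∃ m, n = m + 1 := ⟨n - 1, by omega⟩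
  rw [NS, Finset.card_union_of_disjoint, Finset.card_union_of_disjoint,
    Finset.card_image_of_injOn, Finset.card_image_of_injOn, Finset.card_powersetCard,
    Nat.card_Icc, Nat.card_Icc, Finset.card_pair, Nat.choose_succ_succ' m 1, Nat.choose_one_right]
  · simp only [show m + 1 + 1 - 2 = m by omega]
    norm_num
    omega
  · decide
  · intro c hc d hd h
    simp only [Finset.coe_Icc, Set.mem_Icc] at hc hd
    have h' : ({2, 3, c} : Finset ℕ) = {2, 3, d} := h
    have : c ∈ ({2, 3, d} : Finset ℕ) := by rw [← h']; simp
    simp at this; omega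
  · intro x hx y hy h
    simp only [Finset.mem_coe, Finset.mem_powersetCard] at hx hy
    have hx' : 1 ∉ x := fun h => by have := hx.1 h; simp at this
    have hy' : 1 ∉ y := fun h => by have := hy.1 h; simp at this
    rw [← Finset.erase_insert hx', ← Finset.erase_insert hy', h]
  · rw [Finset.disjoint_left]
    intro T hT hT'
    obtain ⟨c, hc, rfl⟩ := Finset.mem_image.1 hT
    simp only [Finset.mem_insert, Finset.mem_singleton] at hT'
    rcases hT' with h | h
    · have : 3 ∈ ({2, 3, c} : Finset ℕ) := by simp
      rw [h] at this; simp at this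
    · have : 2 ∈ ({2, 3, c} : Finset ℕ) := by simp
      rw [h] at this; simp at this
  · rw [Finset.disjoint_left]
    intro T hT hT'
    obtain ⟨e, he, rfl⟩ := Finset.mem_image.1 hT
    have h1 : 1 ∈ insert 1 e := Finset.mem_insert_self _ _
    simp only [Finset.mem_union, Finset.mem_image, Finset.mem_insert, Finset.mem_singleton] at hT'
    rcases hT' with ⟨c, hc, h⟩ | h | h
    · rw [← h] at h1; simp at hc h1; omega
    · rw [h] at h1; simp at h1
    · rw [h] at h1; simp at h1

lemma NS_sub {n : ℕ} (hn : 5 ≤ n) : NS n ⊆ ksubsets n 3 := by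
  intro T hT
  simp only [NS, Finset.mem_union, Finset.mem_image, Finset.mem_insert, Finset.mem_singleton,
    Finset.mem_powersetCard] at hT
  rw [mem_ks]
  rcases hT with ⟨e, ⟨he, hc⟩, rfl⟩ | ⟨c, hc, rfl⟩ | rfl | rfl
  · have h1 : 1 ∉ e := fun h => by have := he h; simp at this
    refine ⟨?_, by rw [Finset.card_insert_of_notMem h1, hc]⟩
    intro x hx
    rcases Finset.mem_insert.1 hx with rfl | hx
    · simp; omega
    · have := Finset.mem_Icc.1 (he hx); rw [Finset.mem_Icc]; omega
  · rw [Finset.mem_Icc] at hc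
    refine ⟨?_, Finset.card_eq_three.2 ⟨2, 3, c, by omega, by omega, by omega, rfl⟩⟩
    intro x hx; simp at hx; rw [Finset.mem_Icc]; omega
  · refine ⟨?_, by decide⟩
    intro x hx; simp at hx; rw [Finset.mem_Icc]; omega
  · refine ⟨?_, by decide⟩
    intro x hx; simp at hx; rw [Finset.mem_Icc]; omega

lemma card_ks (n k : ℕ) : (ksubsets n k).card = n.choose k := by
  rw [ks_eq, Finset.card_powersetCard]; simp

lemma card_SS {n : ℕ} (hn : 5 ≤ n) : (SS n).card = n.choose 3 - n.choose 2 := by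
  rw [SS, Finset.card_sdiff_of_subset (NS_sub hn), card_NS hn, card_ks]

lemma choose_le {n : ℕ} (hn : 5 ≤ n) : n.choose 2 ≤ n.choose 3 := by
  rw [← card_NS hn, ← card_ks]; exact Finset.card_le_card (NS_sub hn)

lemma choose_two_ge {n : ℕ} (hn : 5 ≤ n) : 2 * n ≤ n.choose 2 := by
  rw [Nat.choose_two_right, Nat.le_div_iff_mul_le (by norm_num)]
  obtain ⟨m, rfl⟩ : ∃ m, n = m + 5 := ⟨n - 5, by omega⟩
  simp only [show m + 5 - 1 = m + 4 by omega]; nlinarith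

lemma card_PS {n : ℕ} (hn : 5 ≤ n) : (PS n).card = n.choose 2 - 2 * n + 2 := by
  rw [PS, Finset.card_erase_of_mem, Finset.card_powersetCard, Nat.card_Icc]
  · have h := choose_two_ge hn
    obtain ⟨m, rfl⟩ : ∃ m, n = m + 2 := ⟨n - 2, by omega⟩
    have h1 := Nat.choose_succ_succ' (m + 1) 1
    have h2 := Nat.choose_succ_succ' m 1
    simp only [Nat.choose_one_right, show m + 1 + 1 = m + 2 by omega,
      show 1 + 1 = 2 by omega] at h1 h2
    simp only [show m + 2 - 1 + 1 - 2 = m by omega]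
    omega
  · rw [Finset.mem_powersetCard]
    refine ⟨?_, by decide⟩
    intro x hx; simp at hx; rw [Finset.mem_Icc]; omega

/-! ### Relations -/

lemma pair_mem_ks {n i j : ℕ} (hi : i ∈ Finset.Icc 1 n) (hj : j ∈ Finset.Icc 1 n) (h : i ≠ j) :
    ({i, j} : Finset ℕ) ∈ ksubsets n 2 := by
  rw [mem_ks]
  refine ⟨?_, Finset.card_pair h⟩
  intro x hx
  simp only [Finset.mem_insert, Finset.mem_singleton] at hx
  rcases hx with rfl | rfl <;> assumption

lemma two_vP (n : ℕ) {e : Finset ℕ} (he : e.card = 2) (hn : n ∉ e) :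
    (2 : ℤ) • vP n e = ∑ i ∈ e, vM n {i, n} - vM n e := by
  obtain ⟨i, j, hij, rfl⟩ := Finset.card_eq_two.1 he
  simp only [Finset.mem_insert, Finset.mem_singleton, not_or] at hn
  rw [vP, Finset.sum_pair hij, Finset.sum_pair hij, vM_eq n hij, vM_eq n (Ne.symm hn.1),
    vM_eq n (Ne.symm hn.2)]
  module

lemma smul_vW (n : ℕ) {j : ℕ} (hj : j ≠ n) :
    (2 * ((n : ℤ) - 6)) • vW n j = vE n j - vE n n - ((n : ℤ) - 6) • vM n {j, n} := by
  rw [vM_eq n hj, vW, vE, vE]; module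

lemma PS_prop {n : ℕ} (hn : 5 ≤ n) {e : Finset ℕ} (he : e ∈ PS n) :
    e.card = 2 ∧ n ∉ e ∧ e ≠ {2, 3} ∧ ∀ i ∈ e, i ∈ Finset.Icc 2 (n - 1) := by
  obtain ⟨h1, h2⟩ := Finset.mem_erase.1 he
  obtain ⟨h3, h4⟩ := Finset.mem_powersetCard.1 h2
  refine ⟨h4, fun h => ?_, h1, h3⟩
  have := Finset.mem_Icc.1 (h3 h); omega

lemma rel_mem {n : ℕ} (hn : 5 ≤ n) (D : Submodule ℤ (Tri n → ℤ))
    (h : ∀ e ∈ ksubsets n 2, vM n e ∈ D) :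
    (∀ i ∈ Finset.Icc 1 n, vE n i ∈ D) ∧ (3 * ((n : ℤ) - 3)) • vJ n ∈ D ∧
    (∀ j ∈ Finset.Icc 2 (n - 1), vM n {j, n} ∈ D) ∧
    (∀ j ∈ Finset.Icc 2 (n - 1), (2 * ((n : ℤ) - 6)) • vW n j ∈ D) ∧
    (∀ e ∈ PS n, (2 : ℤ) • vP n e ∈ D) := by
  have hE : ∀ i ∈ Finset.Icc 1 n, vE n i ∈ D := fun i hi => by
    rw [← sum_vM n i hi]
    refine Submodule.sum_mem _ fun j hj => h _ (pair_mem_ks hi (Finset.mem_of_mem_erase hj)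
      (Finset.ne_of_mem_erase hj).symm)
  have hA : ∀ j ∈ Finset.Icc 2 (n - 1), vM n {j, n} ∈ D := fun j hj => by
    rw [Finset.mem_Icc] at hj
    exact h _ (pair_mem_ks (by rw [Finset.mem_Icc]; omega) (by rw [Finset.mem_Icc]; omega)
      (by omega))
  refine ⟨hE, ?_, hA, ?_, ?_⟩
  · have h1 := sum_vM_Y n (by omega)
    rw [eq_add_of_sub_eq h1.symm]
    refine D.add_mem (Submodule.sum_mem _ fun e he => h e ?_) (hE 1 (by simp; omega))
    rw [Finset.mem_powersetCard] at he
    rw [mem_ks]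
    exact ⟨he.1.trans (Finset.Icc_subset_Icc (by omega) le_rfl), he.2⟩
  · intro j hj
    have hj' := Finset.mem_Icc.1 hj
    rw [smul_vW n (by omega)]
    exact D.sub_mem (D.sub_mem (hE j (by rw [Finset.mem_Icc]; omega))
      (hE n (by rw [Finset.mem_Icc]; omega))) (D.smul_mem _ (hA j hj))
  · intro e he
    obtain ⟨h1, h2, h3, h4⟩ := PS_prop hn he
    rw [two_vP n h1 h2]
    refine D.sub_mem (Submodule.sum_mem _ fun i hi => hA i (h4 i hi)) (h e ?_)
    rw [mem_ks]
    exact ⟨fun i hi => by have := Finset.mem_Icc.1 (h4 i hi); rw [Finset.mem_Icc]; omega, h1⟩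

lemma mem_rel {n : ℕ} (hn : 5 ≤ n) (D : Submodule ℤ (Tri n → ℤ))
    (hEn : vE n n ∈ D) (hJ : (3 * ((n : ℤ) - 3)) • vJ n ∈ D)
    (hA : ∀ j ∈ Finset.Icc 2 (n - 1), vM n {j, n} ∈ D)
    (hW : ∀ j ∈ Finset.Icc 2 (n - 1), (2 * ((n : ℤ) - 6)) • vW n j ∈ D)
    (hP : ∀ e ∈ PS n, (2 : ℤ) • vP n e ∈ D) : ∀ e ∈ ksubsets n 2, vM n e ∈ D := by
  have hE2 : ∀ j ∈ Finset.Icc 2 n, vE n j ∈ D := fun j hj => by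
    rw [Finset.mem_Icc] at hj
    by_cases hjn : j = n
    · exact hjn ▸ hEn
    have hj' : j ∈ Finset.Icc 2 (n - 1) := by rw [Finset.mem_Icc]; omega
    have h1 := smul_vW n hjn
    have h2 : vE n j = (2 * ((n : ℤ) - 6)) • vW n j + vE n n + ((n : ℤ) - 6) • vM n {j, n} := by
      rw [h1]; abel
    rw [h2]
    exact D.add_mem (D.add_mem (hW j hj') hEn) (D.smul_mem _ (hA j hj'))
  have hE1 : vE n 1 ∈ D := by
    have h1 := sum_vE n
    rw [← Finset.add_sum_erase _ _ (show 1 ∈ Finset.Icc 1 n by simp; omega), icc_erase_one] at h1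
    rw [eq_sub_of_add_eq h1]
    refine D.sub_mem ?_ (Submodule.sum_mem _ hE2)
    have := D.smul_mem (2 : ℤ) hJ
    rw [smul_smul] at this
    convert this using 2; ring
  have hMP : ∀ e ∈ (Finset.powersetCard 2 (Finset.Icc 2 n)).erase {2, 3}, vM n e ∈ D := by
    intro e he
    obtain ⟨hne, he⟩ := Finset.mem_erase.1 he
    obtain ⟨hs, hc⟩ := Finset.mem_powersetCard.1 he
    by_cases hin : n ∈ e
    · obtain ⟨j, hj⟩ := Finset.card_eq_one.1
        (show (e.erase n).card = 1 by rw [Finset.card_erase_of_mem hin, hc])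
      have hje : j ∈ e.erase n := by rw [hj]; simp
      have he2 : e = {j, n} := by
        rw [← Finset.insert_erase hin, hj, Finset.pair_comm]
      have := Finset.mem_Icc.1 (hs (Finset.mem_of_mem_erase hje))
      have := Finset.ne_of_mem_erase hje
      rw [he2]
      exact hA j (Finset.mem_Icc.2 (by omega))
    · have hs' : ∀ i ∈ e, i ∈ Finset.Icc 2 (n - 1) := fun i hi => by
        have := Finset.mem_Icc.1 (hs hi)
        have : i ≠ n := fun h => hin (h ▸ hi)
        exact Finset.mem_Icc.2 (by omega)
      have h1 := hP e (Finset.mem_erase.2 ⟨hne, Finset.mem_powersetCard.2 ⟨hs', hc⟩⟩)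
      have h2 := two_vP n hc hin
      have h3 : vM n e = ∑ i ∈ e, vM n {i, n} - (2 : ℤ) • vP n e := by rw [h2]; abel
      rw [h3]
      exact D.sub_mem (Submodule.sum_mem _ fun i hi => hA i (hs' i hi)) h1
  have h23 : ({2, 3} : Finset ℕ) ∈ Finset.powersetCard 2 (Finset.Icc 2 n) := by
    rw [Finset.mem_powersetCard]
    refine ⟨?_, by decide⟩
    intro x hx; simp at hx; rw [Finset.mem_Icc]; omega
  have hMY : ∀ e ∈ Finset.powersetCard 2 (Finset.Icc 2 n), vM n e ∈ D := by
    intro e he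
    by_cases h : e = {2, 3}
    · have h1 := sum_vM_Y n (by omega)
      rw [← Finset.add_sum_erase _ _ h23] at h1
      rw [h, eq_sub_of_add_eq h1]
      exact D.sub_mem (D.sub_mem hJ hE1) (Submodule.sum_mem _ hMP)
    · exact hMP e (Finset.mem_erase.2 ⟨h, he⟩)
  have hM1 : ∀ j ∈ Finset.Icc 2 n, vM n {1, j} ∈ D := by
    intro j hj
    have hj' := Finset.mem_Icc.1 hj
    have h1 := sum_vM n j (by rw [Finset.mem_Icc]; omega)
    have hm : 1 ∈ (Finset.Icc 1 n).erase j := by simp; omega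
    rw [← Finset.add_sum_erase _ _ hm] at h1
    rw [Finset.pair_comm, eq_sub_of_add_eq h1]
    refine D.sub_mem (hE2 j hj) (Submodule.sum_mem _ fun k hk => ?_)
    simp only [Finset.mem_erase, Finset.mem_Icc] at hk
    apply hMY
    rw [Finset.mem_powersetCard]
    refine ⟨?_, Finset.card_pair (by omega)⟩
    intro x hx; simp at hx; rw [Finset.mem_Icc]; omega
  intro e he
  obtain ⟨hs, hc⟩ := mem_ks.1 he
  by_cases h1 : 1 ∈ e
  · obtain ⟨j, hj⟩ := Finset.card_eq_one.1
      (show (e.erase 1).card = 1 by rw [Finset.card_erase_of_mem h1, hc])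
    have hje : j ∈ e.erase 1 := by rw [hj]; simp
    rw [← Finset.insert_erase h1, hj]
    have := Finset.mem_Icc.1 (hs (Finset.mem_of_mem_erase hje))
    have := Finset.ne_of_mem_erase hje
    exact hM1 j (by rw [Finset.mem_Icc]; omega)
  · apply hMY
    rw [Finset.mem_powersetCard, ← icc_erase_one, Finset.subset_erase]
    exact ⟨⟨hs, h1⟩, hc⟩

/-! ### Quotient by an adapted basis -/

lemma quot_equiv {ι G : Type*} [Fintype ι] [AddCommGroup G] (b : Module.Basis ι ℤ G) (d : ι → ℤ)
    (D : Submodule ℤ G) (hD : D = Submodule.span ℤ (Set.range fun i => d i • b i)) :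
    Nonempty ((G ⧸ D) ≃+ ∀ i, ZMod (d i).natAbs) := by
  let f : G →ₗ[ℤ] (∀ i, ZMod (d i).natAbs) :=
    LinearMap.pi fun i => ((Int.castAddHom (ZMod (d i).natAbs)).toIntLinearMap).comp (b.coord i)
  have hf : ∀ x i, f x i = ((b.repr x i : ℤ) : ZMod (d i).natAbs) := fun x i => rfl
  have hsurj : Function.Surjective f := by
    intro y
    choose z hz using fun i => ZMod.intCast_surjective (y i)
    refine ⟨∑ i, z i • b i, ?_⟩
    funext i
    rw [hf, b.repr_sum_self, hz]
  have hker : D = LinearMap.ker f := by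
    rw [hD]
    apply le_antisymm
    · rw [Submodule.span_le]
      rintro _ ⟨i, rfl⟩
      rw [SetLike.mem_coe, LinearMap.mem_ker]
      funext j
      rw [hf]
      simp only [map_smul, Module.Basis.repr_self, Finsupp.smul_single, smul_eq_mul, mul_one]
      by_cases h : i = j
      · subst h
        rw [Finsupp.single_eq_same, Pi.zero_apply, ZMod.intCast_zmod_eq_zero_iff_dvd]
        exact Int.natAbs_dvd.2 dvd_rfl
      · rw [Finsupp.single_eq_of_ne (Ne.symm h)]; simp
    · intro x hx
      rw [← b.sum_repr x]
      refine Submodule.sum_mem _ fun i _ => ?_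
      have h1 : f x i = 0 := by rw [LinearMap.mem_ker.1 hx]; rfl
      rw [hf, ZMod.intCast_zmod_eq_zero_iff_dvd, Int.natAbs_dvd] at h1
      obtain ⟨c, hc⟩ := h1
      rw [hc, mul_comm, mul_smul]
      exact Submodule.smul_mem _ _ (Submodule.subset_span ⟨i, rfl⟩)
  exact ⟨((Submodule.quotEquivOfEq _ _ hker).trans
    (f.quotKerEquivOfSurjective hsurj)).toAddEquiv⟩

abbrev Idx (n : ℕ) := ↥(SS n) ⊕ (↥(PS n) ⊕ (↥(Finset.Icc 2 (n - 1)) ⊕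
  (↥(Finset.Icc 2 (n - 1)) ⊕ (Unit ⊕ Unit))))

noncomputable def fam (n : ℕ) (p q : Tri n → ℤ) : Idx n → (Tri n → ℤ) :=
  Sum.elim (fun T => vD n T.1) (Sum.elim (fun e => vP n e.1) (Sum.elim (fun j => vW n j.1)
    (Sum.elim (fun j => vM n {j.1, n}) (Sum.elim (fun _ => p) (fun _ => q)))))

def dd (n : ℕ) (dp dq : ℤ) : Idx n → ℤ :=
  Sum.elim (fun _ => 0) (Sum.elim (fun _ => 2) (Sum.elim (fun _ => 2 * ((n : ℤ) - 6))
    (Sum.elim (fun _ => 1) (Sum.elim (fun _ => dp) (fun _ => dq)))))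

def piSplit {α β : Type*} (A : α ⊕ β → Type*) [∀ x, AddCommGroup (A x)] :
    (∀ x, A x) ≃+ (∀ a, A (Sum.inl a)) × (∀ b, A (Sum.inr b)) :=
  { Equiv.sumPiEquivProdPi A with map_add' := fun _ _ => rfl }

def dropUnique {α β : Type*} [AddCommGroup α] [AddCommGroup β] [Unique α] : α × β ≃+ β :=
  { toFun := Prod.snd
    invFun := fun b => (0, b)
    left_inv := fun x => Prod.ext (Subsingleton.elim _ _) rfl
    right_inv := fun _ => rfl
    map_add' := fun _ _ => rfl }

def unitPi (A : Unit → Type*) [∀ x, AddCommGroup (A x)] : (∀ x, A x) ≃+ A () :=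
  { toFun := fun f => f ()
    invFun := fun a _ => a
    left_inv := fun _ => rfl
    right_inv := fun _ => rfl
    map_add' := fun _ _ => rfl }

def reidx {α β A : Type*} [AddCommGroup A] (e : α ≃ β) : (α → A) ≃+ (β → A) :=
  { e.arrowCongr (Equiv.refl A) with map_add' := fun _ _ => rfl }

lemma unfold_equiv (n a b c : ℕ) (dp dq : ℤ) (ha : (SS n).card = a) (hb : (PS n).card = b)
    (hc : (Finset.Icc 2 (n - 1)).card = c) :
    Nonempty ((∀ i, ZMod (dd n dp dq i).natAbs) ≃+ ((Fin a → ℤ) × (Fin b → ZMod 2) ×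
      (Fin c → ZMod (2 * ((n : ℤ) - 6)).natAbs) × (ZMod dp.natAbs × ZMod dq.natAbs))) := by
  let ea := (SS n).equivFinOfCardEq ha
  let eb := (PS n).equivFinOfCardEq hb
  let ec := (Finset.Icc 2 (n - 1)).equivFinOfCardEq hc
  refine ⟨(piSplit _).trans (AddEquiv.prodCongr (reidx (A := ℤ) ea) ((piSplit _).trans
    (AddEquiv.prodCongr (reidx (A := ZMod 2) eb) ((piSplit _).trans
    (AddEquiv.prodCongr (reidx (A := ZMod (2 * ((n : ℤ) - 6)).natAbs) ec) ?_)))))⟩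
  have e1 : (∀ b : Unit ⊕ Unit, ZMod (dd n dp dq (.inr (.inr (.inr (.inr b))))).natAbs) ≃+
      (ZMod dp.natAbs × ZMod dq.natAbs) :=
    (piSplit _).trans (AddEquiv.prodCongr (unitPi _) (unitPi _))
  haveI : Unique (∀ x : ↥(Finset.Icc 2 (n - 1)), ZMod (dd n dp dq (.inr (.inr (.inr (.inl x))))).natAbs) :=
    { default := 0
      uniq := fun f => funext fun x => Subsingleton.elim (α := ZMod 1) (f x) 0 }
  exact (piSplit _).trans (dropUnique.trans e1)

theorem main_equiv (n : ℕ) (hn : 5 ≤ n) (p q : Tri n → ℤ) (dp dq : ℤ)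
    (hsp : ∀ H : Submodule ℤ (Tri n → ℤ), p ∈ H → q ∈ H → vV n n ∈ H ∧ vJ n ∈ H)
    (hto : ∀ D : Submodule ℤ (Tri n → ℤ), vE n n ∈ D → (3 * ((n : ℤ) - 3)) • vJ n ∈ D →
      dp • p ∈ D ∧ dq • q ∈ D)
    (hfrom : ∀ D : Submodule ℤ (Tri n → ℤ), dp • p ∈ D → dq • q ∈ D →
      vE n n ∈ D ∧ (3 * ((n : ℤ) - 3)) • vJ n ∈ D) :
    Nonempty (SmithGroup (interMat n 2 3 1) ≃+
      ((Fin (n.choose 3 - n.choose 2) → ℤ) ×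
        (Fin (n.choose 2 - 2 * n + 2) → ZMod 2) ×
        (Fin (n - 2) → ZMod (2 * ((n : ℤ) - 6)).natAbs) ×
        (ZMod dp.natAbs × ZMod dq.natAbs))) := by
  have hc : (Finset.Icc 2 (n - 1)).card = n - 2 := by rw [Nat.card_Icc]; omega
  have hspan : ⊤ ≤ Submodule.span ℤ (Set.range (fam n p q)) := by
    have hm : ∀ i, fam n p q i ∈ Submodule.span ℤ (Set.range (fam n p q)) := fun i =>
      Submodule.subset_span ⟨i, rfl⟩
    obtain ⟨h1, h2⟩ := hsp _ (hm (.inr (.inr (.inr (.inr (.inl ()))))))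
      (hm (.inr (.inr (.inr (.inr (.inr ()))))))
    rw [top_of_mem hn _ h2 h1 (fun j hj => hm (.inr (.inr (.inr (.inl ⟨j, hj⟩)))))
      (fun j hj => hm (.inr (.inr (.inl ⟨j, hj⟩)))) (fun e he => hm (.inr (.inl ⟨e, he⟩)))
      (fun T hT => hm (.inl ⟨T, hT⟩))]
  have hcard : Fintype.card (Idx n) = Module.finrank ℤ (Tri n → ℤ) := by
    rw [Module.finrank_fintype_fun_eq_card]
    simp only [Fintype.card_sum, Fintype.card_coe, Fintype.card_unit, card_SS hn, card_PS hn, hc,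
      card_ks]
    have := choose_le hn
    have := choose_two_ge hn
    omega
  let b := basisOfTopLeSpanOfCardEqFinrank (fam n p q) hspan hcard
  have hb : ∀ i, b i = fam n p q i := fun i => by
    simp only [b, coe_basisOfTopLeSpanOfCardEqFinrank]
  have hD : Submodule.span ℤ (Set.range fun r => interMat n 2 3 1 r) =
      Submodule.span ℤ (Set.range fun i => dd n dp dq i • b i) := by
    apply le_antisymm
    · rw [Submodule.span_le]
      rintro _ ⟨⟨e, he⟩, rfl⟩
      set D := Submodule.span ℤ (Set.range fun i => dd n dp dq i • b i) with hDdef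
      have hm : ∀ i, dd n dp dq i • fam n p q i ∈ D := fun i =>
        Submodule.subset_span ⟨i, by simp only [hb]⟩
      obtain ⟨h1, h2⟩ := hfrom D (hm (.inr (.inr (.inr (.inr (.inl ()))))))
        (hm (.inr (.inr (.inr (.inr (.inr ()))))))
      refine mem_rel hn D h1 h2 (fun j hj => ?_)
        (fun j hj => hm (.inr (.inr (.inl ⟨j, hj⟩)))) (fun e he => hm (.inr (.inl ⟨e, he⟩))) e he
      have := hm (.inr (.inr (.inr (.inl ⟨j, hj⟩))))
      rw [← one_smul ℤ (vM n {j, n})]; exact this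
    · rw [Submodule.span_le]
      set D := Submodule.span ℤ (Set.range fun r => interMat n 2 3 1 r) with hDdef
      have hM : ∀ e ∈ ksubsets n 2, vM n e ∈ D := fun e he =>
        Submodule.subset_span ⟨⟨e, he⟩, rfl⟩
      obtain ⟨hE, hJ, hA, hW, hP⟩ := rel_mem hn D hM
      obtain ⟨h1, h2⟩ := hto D (hE n (by rw [Finset.mem_Icc]; omega)) hJ
      rintro _ ⟨i, rfl⟩
      simp only [hb]
      rcases i with T | e | j | j | u | u
      · show (0 : ℤ) • _ ∈ D
        rw [zero_smul]; exact D.zero_mem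
      · exact hP e.1 e.2
      · exact hW j.1 j.2
      · exact D.smul_mem 1 (hA j.1 j.2)
      · exact h1
      · exact h2
  obtain ⟨e1⟩ := quot_equiv b (dd n dp dq) _ hD
  obtain ⟨e2⟩ := unfold_equiv n _ _ _ dp dq (card_SS hn) (card_PS hn) hc
  exact ⟨e1.trans e2⟩

def finSplit (k : ℕ) (A : Type*) [AddCommGroup A] : (Fin (k + 1) → A) ≃+ (Fin k → A) × A :=
  { toFun := fun f => (fun i => f i.succ, f 0)
    invFun := fun x => Fin.cons x.2 x.1
    left_inv := fun f => by
      funext i; refine Fin.cases ?_ (fun j => ?_) i <;> simp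
    right_inv := fun x => by simp
    map_add' := fun _ _ => rfl }

def shuffle3 {X Y Z W P Q R : Type*} [AddCommGroup X] [AddCommGroup Y] [AddCommGroup Z]
    [AddCommGroup W] [AddCommGroup P] [AddCommGroup Q] [AddCommGroup R]
    (e : Y ≃+ W × R) : (X × Y × Z × (P × Q)) ≃+ (X × W × Z × (Q × (R × P))) :=
  { toFun := fun x => (x.1, (e x.2.1).1, x.2.2.1, (x.2.2.2.2, ((e x.2.1).2, x.2.2.2.1)))
    invFun := fun x => (x.1, e.symm (x.2.1, x.2.2.2.2.1), x.2.2.1, (x.2.2.2.2.2, x.2.2.2.1))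
    left_inv := fun x => by simp
    right_inv := fun x => by simp
    map_add' := fun x y => by simp }

/-- `S(A_{n,2,3,1}) ≅ ℤ^{C(n,3)−C(n,2)} ⊕ (ℤ/2ℤ)^{C(n,2)−2n+1} ⊕ (ℤ/2(n−6)ℤ)^{n−2} ⊕ T`,
with `T = ℤ/(n−3)(n−6)ℤ ⊕ ℤ/6ℤ` if `3 ∣ n` and `T = ℤ/3(n−3)(n−6)ℤ ⊕ ℤ/2ℤ` otherwise;
`ℤ/mℤ` means `ZMod |m|`, and `ℤ/0ℤ = ℤ`. -/
theorem statement18 (n : ℕ) (hn : 5 ≤ n) :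
    (3 ∣ n → Nonempty (SmithGroup (interMat n 2 3 1) ≃+
      ((Fin (n.choose 3 - n.choose 2) → ℤ) ×
        (Fin (n.choose 2 - 2 * n + 1) → ZMod 2) ×
        (Fin (n - 2) → ZMod (2 * ((n : ℤ) - 6)).natAbs) ×
        (ZMod (((n : ℤ) - 3) * ((n : ℤ) - 6)).natAbs × ZMod 6)))) ∧
    (¬ 3 ∣ n → Nonempty (SmithGroup (interMat n 2 3 1) ≃+
      ((Fin (n.choose 3 - n.choose 2) → ℤ) ×
        (Fin (n.choose 2 - 2 * n + 1) → ZMod 2) ×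
        (Fin (n - 2) → ZMod (2 * ((n : ℤ) - 6)).natAbs) ×
        (ZMod (3 * ((n : ℤ) - 3) * ((n : ℤ) - 6)).natAbs × ZMod 2)))) := by
  constructor
  · rintro ⟨k, hk⟩
    have hk' : (n : ℤ) = 3 * k := by exact_mod_cast hk
    obtain ⟨e⟩ := main_equiv n hn (vJ n + ((k : ℤ) - 2) • vV n n) (vV n n) 3
      (((n : ℤ) - 3) * ((n : ℤ) - 6))
      (fun H h1 h2 => ⟨h2, by
        have := H.sub_mem h1 (H.smul_mem ((k : ℤ) - 2) h2)
        simpa using this⟩)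
      (fun D h1 h2 => ⟨by
        have : (3 : ℤ) • (vJ n + ((k : ℤ) - 2) • vV n n) = vE n n := by
          rw [vE, hk']; module
        rw [this]; exact h1, by
        have : (((n : ℤ) - 3) * ((n : ℤ) - 6)) • vV n n
            = ((n : ℤ) - 3) • vE n n - (3 * ((n : ℤ) - 3)) • vJ n := by
          rw [vE]; module
        rw [this]; exact D.sub_mem (D.smul_mem _ h1) h2⟩)
      (fun D h1 h2 => by
        have h3 : vE n n ∈ D := by
          have : (3 : ℤ) • (vJ n + ((k : ℤ) - 2) • vV n n) = vE n n := by
            rw [vE, hk']; module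
          rw [← this]; exact h1
        refine ⟨h3, ?_⟩
        have : (3 * ((n : ℤ) - 3)) • vJ n
            = ((n : ℤ) - 3) • vE n n - (((n : ℤ) - 3) * ((n : ℤ) - 6)) • vV n n := by
          rw [vE]; module
        rw [this]; exact D.sub_mem (D.smul_mem _ h3) h2)
    let crt : ZMod 6 ≃+ ZMod 2 × ZMod 3 :=
      (ZMod.chineseRemainder (show Nat.Coprime 2 3 by norm_num)).toAddEquiv
    exact ⟨(e.trans (shuffle3 (finSplit (n.choose 2 - 2 * n + 1) (ZMod 2)))).trans
      (AddEquiv.prodCongr (AddEquiv.refl _) (AddEquiv.prodCongr (AddEquiv.refl _)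
        (AddEquiv.prodCongr (AddEquiv.refl _)
          (AddEquiv.prodCongr (AddEquiv.refl _) crt.symm))))⟩
  · intro h3
    obtain ⟨a, b, hab⟩ : ∃ a b : ℤ, ((n : ℤ) - 6) * b - 3 * a = 1 := by
      have : n % 3 = 1 ∨ n % 3 = 2 := by omega
      rcases this with h | h
      · exact ⟨((n : ℤ) - 7) / 3, 1, by omega⟩
      · exact ⟨-(((n : ℤ) - 5) / 3), -1, by omega⟩
    have hpv : vV n n = b • vE n n - (3 : ℤ) • (a • vV n n + b • vJ n) := by
      rw [vE]
      have : b • (((n : ℤ) - 6) • vV n n + (3 : ℤ) • vJ n) - (3 : ℤ) • (a • vV n n + b • vJ n)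
        = (((n : ℤ) - 6) * b - 3 * a) • vV n n := by module
      rw [this, hab, one_smul]
    have hpJ : vJ n = ((n : ℤ) - 6) • (a • vV n n + b • vJ n) - a • vE n n := by
      rw [vE]
      have : ((n : ℤ) - 6) • (a • vV n n + b • vJ n)
          - a • (((n : ℤ) - 6) • vV n n + (3 : ℤ) • vJ n)
        = (((n : ℤ) - 6) * b - 3 * a) • vJ n := by module
      rw [this, hab, one_smul]
    have hq : (3 * ((n : ℤ) - 3) * ((n : ℤ) - 6)) • (a • vV n n + b • vJ n)
        = (3 * ((n : ℤ) - 3)) • vJ n + (3 * ((n : ℤ) - 3) * a) • vE n n := by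
      have : (3 * ((n : ℤ) - 3)) • vJ n = (3 * ((n : ℤ) - 3)) •
          (((n : ℤ) - 6) • (a • vV n n + b • vJ n) - a • vE n n) := by rw [← hpJ]
      rw [this]; module
    obtain ⟨e⟩ := main_equiv n hn (vE n n) (a • vV n n + b • vJ n) 1
      (3 * ((n : ℤ) - 3) * ((n : ℤ) - 6))
      (fun H h1 h2 => ⟨by
        rw [hpv]; exact H.sub_mem (H.smul_mem _ h1) (H.smul_mem _ h2), by
        rw [hpJ]; exact H.sub_mem (H.smul_mem _ h2) (H.smul_mem _ h1)⟩)
      (fun D h1 h2 => ⟨D.smul_mem _ h1, by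
        rw [hq]; exact D.add_mem h2 (D.smul_mem _ h1)⟩)
      (fun D h1 h2 => by
        rw [one_smul] at h1
        refine ⟨h1, ?_⟩
        rw [eq_sub_of_add_eq hq.symm]
        exact D.sub_mem h2 (D.smul_mem _ h1))
    let dr : ZMod 2 × ZMod (1 : ℤ).natAbs ≃+ ZMod 2 :=
      AddEquiv.prodComm.trans (dropUnique (α := ZMod 1) (β := ZMod 2))
    exact ⟨(e.trans (shuffle3 (finSplit (n.choose 2 - 2 * n + 1) (ZMod 2)))).trans
      (AddEquiv.prodCongr (AddEquiv.refl _) (AddEquiv.prodCongr (AddEquiv.refl _)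
        (AddEquiv.prodCongr (AddEquiv.refl _)
          (AddEquiv.prodCongr (AddEquiv.refl _) dr))))⟩
end
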